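/- arXiv:1304.1639 — 2 statements merged into one kernel-verified Lean document; each statement's English description precedes it below -/
import Mathlib

section
/- Let S = {a, a', b, b'} be an alphabet with complementation consisting of exactly four letters (with a'' = a, b'' = b). Every polybox code V ⊆ S^d without twin pairs satisfying |V| ≤ 7 is rigid. -/
/-- `ES` is the set of all `B ⊆ S` containing exactly one letter from each
complementary pair `{s, s'}`. -/
def ESet {S : Type*} (c : S → S) : Set (Set S) :=
  {B | ∀ s, s ∈ B ↔ c s ∉ B}

/-- `Es = {B ∈ ES : s ∈ B}`. -/
def Eltr {S : Type*} (c : S → S) (s : S) : Set (Set S) :=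
  {B | B ∈ ESet c ∧ s ∈ B}

/-- The equicomplementary realization `v̌ = Ev₁ × ⋯ × Ev_d` of a word `v ∈ S^d`,
viewed as a box in the `d`-box `(ES)^d`. -/
def realize {S : Type*} (c : S → S) {d : ℕ} (v : Fin d → S) :
    Set (Fin d → Set S) :=
  {B | ∀ i, B i ∈ Eltr c (v i)}

/-- Words `u, v ∈ S^d` are dichotomous: some coordinate carries complementary
letters. -/
def Dichotomous {S : Type*} (c : S → S) {d : ℕ} (u v : Fin d → S) : Prop :=
  ∃ j, v j = c (u j)

/-- Words `u, v ∈ S^d` form a twin pair. -/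
def TwinPair {S : Type*} (c : S → S) {d : ℕ} (u v : Fin d → S) : Prop :=
  ∃ j, v j = c (u j) ∧ ∀ i, i ≠ j → u i = v i

/-- A polybox code: a set of pairwise dichotomous words. -/
def PolyboxCode {S : Type*} (c : S → S) {d : ℕ} (V : Set (Fin d → S)) : Prop :=
  ∀ u ∈ V, ∀ v ∈ V, u ≠ v → Dichotomous c u v

/-- Polybox codes `V, W ⊆ S^d` are equivalent if
`⋃_{v ∈ V} v̌ = ⋃_{w ∈ W} w̌`. -/
def Equivalent {S : Type*} (c : S → S) {d : ℕ}
    (V W : Set (Fin d → S)) : Prop :=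
  (⋃ v ∈ V, realize c v) = ⋃ w ∈ W, realize c w

/-- A polybox code `V ⊆ S^d` is rigid if every polybox code equivalent to `V`
equals `V`. -/
def Rigid {S : Type*} (c : S → S) {d : ℕ} (V : Set (Fin d → S)) : Prop :=
  ∀ W : Set (Fin d → S), PolyboxCode c W → Equivalent c V W → W = V

/-!
Induction on `d` shows that the slices of `V` at a fixed first letter are rigid; discarding common
words, it remains to refute a nonempty code `W` equivalent to `V` and disjoint from it. If `s` and
`t` belong to different complementary pairs then `{s, t} ∈ ES`, so `V_s ∪ V_t` and `W_s ∪ W_t` are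
equivalent. With rigid slices this forces each of the four letters to occur in first position in
`V`, and each complementary pair to occur in first position in `W`.

Every box `w̌` with `w ∈ W` is a discrete cube, which `V` partitions nontrivially into subcubes no
two of which are twins. Such a partition has at least five pieces, because a single piece in a layer
leaves the opposite layer partitioning its would-be twin nontrivially. Applied to the layers of `w̌`
in the first coordinate this shows that some letter occurs at least five times in first position in
`V`, or both letters outside the pair of `w 0` occur at least twice. Letting `w 0` run over both
pairs, `|V| ≥ 5 + 1 + 1 + 1` or `|V| ≥ 2 + 2 + 2 + 2`.
-/

open Finset Function

/-! ### Twin-free partitions of a discrete cube -/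

/-- A subcube of the discrete cube `ι → Bool`: `some b` prescribes the coordinate, `none` leaves it
free. -/
abbrev Subcube (ι : Type*) : Type _ := ι → Option Bool

namespace Subcube

variable {ι : Type*}

/-- The set of points of a subcube. -/
def points (u : Subcube ι) : Set (ι → Bool) :=
  {x | ∀ i, ∀ b ∈ u i, x i = b}

/-- A partition of the subcube `q` into finitely many subcubes. -/
structure IsPartition (P : Finset (Subcube ι)) (q : Subcube ι) : Prop where
  iUnion_points : ⋃ p ∈ P, p.points = q.points
  pairwiseDisjoint : (P : Set (Subcube ι)).PairwiseDisjoint points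

section Fix

variable [DecidableEq ι]

/-- The subcube `u` with its `i`-th coordinate prescribed, or re-prescribed, to be `b`. -/
def fix (u : Subcube ι) (i : ι) (b : Bool) : Subcube ι :=
  update u i (some b)

/-- No two members of `P` form a twin pair, i.e. differ exactly in one coordinate prescribed by
both. -/
def TwinFree (P : Finset (Subcube ι)) : Prop :=
  ∀ p ∈ P, ∀ i, ∀ b ∈ p i, p.fix i (!b) ∉ P

theorem TwinFree.mono {P Q : Finset (Subcube ι)} (hQ : TwinFree Q) (h : P ⊆ Q) : TwinFree P :=
  fun p hp i b hb hmem => hQ p (h hp) i b hb (h hmem)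

theorem mem_points_fix {u : Subcube ι} {i : ι} {b : Bool} {x : ι → Bool} :
    x ∈ (u.fix i b).points ↔ x i = b ∧ ∀ j ≠ i, ∀ e ∈ u j, x j = e :=
  (forall_update_iff u fun j o => ∀ e ∈ o, x j = e).trans (by simp)

theorem mem_points_fix_of_eq_none {u : Subcube ι} {i : ι} (hu : u i = none) {b : Bool}
    {x : ι → Bool} : x ∈ (u.fix i b).points ↔ x i = b ∧ x ∈ u.points := by
  rw [mem_points_fix]
  simp only [points, Set.mem_ofPred_eq]
  grind

theorem mem_points_fix_of_eq_some {u : Subcube ι} {i : ι} {b : Bool} (hu : u i = some b)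
    {b' : Bool} {x : ι → Bool} :
    x ∈ (u.fix i b').points ↔ x i = b' ∧ update x i b ∈ u.points := by
  rw [mem_points_fix]
  simp only [points, Set.mem_ofPred_eq]
  grind

theorem update_mem_points_of_eq_none {u : Subcube ι} {i : ι} (hu : u i = none) {b : Bool}
    {x : ι → Bool} : update x i b ∈ u.points ↔ x ∈ u.points := by
  simp only [points, Set.mem_ofPred_eq]
  grind

end Fix

theorem getD_mem_points (u : Subcube ι) (x : ι → Bool) : (fun i => (u i).getD (x i)) ∈ u.points :=
  fun i b hb => by simp [Option.mem_def.1 hb]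

theorem points_nonempty (u : Subcube ι) : u.points.Nonempty :=
  ⟨_, u.getD_mem_points fun _ => true⟩

theorem mem_of_points_subset {u v : Subcube ι} (h : u.points ⊆ v.points) {i : ι} {b : Bool}
    (hb : b ∈ v i) : b ∈ u i := by
  have := h (u.getD_mem_points fun _ => !b) i b hb
  cases hu : u i <;> simp_all

namespace IsPartition

variable {P : Finset (Subcube ι)} {p q : Subcube ι} {i : ι} {b : Bool} {x : ι → Bool}

theorem points_subset (hP : IsPartition P q) (hp : p ∈ P) : p.points ⊆ q.points :=
  hP.iUnion_points ▸ Set.subset_biUnion_of_mem (u := points) hp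

theorem exists_mem_points (hP : IsPartition P q) (hx : x ∈ q.points) : ∃ p ∈ P, x ∈ p.points := by
  simpa only [← hP.iUnion_points, Set.mem_iUnion₂, exists_prop] using hx

theorem eq_of_mem_points (hP : IsPartition P q) {p' : Subcube ι} (hp : p ∈ P) (hp' : p' ∈ P)
    (hx : x ∈ p.points) (hx' : x ∈ p'.points) : p = p' :=
  hP.pairwiseDisjoint.elim hp hp' (Set.not_disjoint_iff.2 ⟨x, hx, hx'⟩)

theorem of_subset (hP : IsPartition P q) {R : Finset (Subcube ι)} {r : Subcube ι} (hR : R ⊆ P)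
    (h : ∀ x, (∃ p ∈ R, x ∈ p.points) ↔ x ∈ r.points) : IsPartition R r where
  iUnion_points := by ext x; simpa only [Set.mem_iUnion₂, exists_prop] using h x
  pairwiseDisjoint := hP.pairwiseDisjoint.subset (coe_subset.2 hR)

theorem exists_mem_coord_ne_none (hP : IsPartition P q) (hne : P ≠ {q}) :
    ∃ p ∈ P, ∃ i, q i = none ∧ p i ≠ none := by
  have hP₀ : P.Nonempty :=
    let ⟨_, hx⟩ := q.points_nonempty
    let ⟨p, hp, _⟩ := hP.exists_mem_points hx
    ⟨p, hp⟩
  obtain ⟨p, hp, hpq⟩ : ∃ p ∈ P, p ≠ q := by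
    by_contra! h
    exact hne (eq_singleton_iff_nonempty_unique_mem.2 ⟨hP₀, h⟩)
  obtain ⟨i, hi⟩ := Function.ne_iff.1 hpq
  have hqi : q i = none := by
    by_contra h
    obtain ⟨b, hb⟩ := Option.ne_none_iff_exists'.1 h
    exact hi ((mem_of_points_subset (hP.points_subset hp) hb).trans hb.symm)
  exact ⟨p, hp, i, hqi, hqi ▸ hi⟩

theorem exists_mem_opposite [DecidableEq ι] (hP : IsPartition P q) (hq : q i = none)
    (hp : p ∈ P) (hpi : p i = some b) (hx : x ∈ p.points) :
    ∃ p' ∈ P, p' i = some (!b) ∧ update x i (!b) ∈ p'.points := by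
  obtain ⟨p', hp', hx'⟩ := hP.exists_mem_points
    ((update_mem_points_of_eq_none hq (b := !b)).2 (hP.points_subset hp hx))
  refine ⟨p', hp', ?_, hx'⟩
  cases hpi' : p' i with
  | none =>
    have hpp' := hP.eq_of_mem_points hp hp' hx ((update_mem_points_of_eq_none hpi').1 hx')
    simp [← hpp', hpi] at hpi'
  | some e => simpa using (hx' i e hpi').symm

theorem card_layer_pos (hP : IsPartition P q) (hq : q i = none) (hp : p ∈ P) (hpi : p i ≠ none)
    (b : Bool) : 0 < #{p ∈ P | p i = some b} := by
  classical
  obtain ⟨e, he⟩ := Option.ne_none_iff_exists'.1 hpi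
  obtain ⟨x, hx⟩ := p.points_nonempty
  obtain ⟨p', hp', hpi', -⟩ := hP.exists_mem_opposite hq hp he hx
  obtain rfl | rfl : b = e ∨ b = !e := by cases b <;> cases e <;> simp
  · exact card_pos.2 ⟨p, by simp [hp, he]⟩
  · exact card_pos.2 ⟨p', by simp [hp', hpi']⟩

section Layers

variable [DecidableEq ι]

theorem layer_not (hP : IsPartition P q) (hq : q i = none)
    (hp : {p ∈ P | p i = some b} = {p}) :
    IsPartition {p ∈ P | p i = some (!b)} (p.fix i (!b)) := by
  obtain ⟨hpP, hpi⟩ := mem_filter.1 (hp ▸ mem_singleton_self p)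
  refine hP.of_subset (filter_subset _ _) fun x => ?_
  rw [mem_points_fix_of_eq_some hpi]
  constructor
  · rintro ⟨r, hr, hx⟩
    obtain ⟨hrP, hri⟩ := mem_filter.1 hr
    obtain ⟨p', hp', hpi', hx'⟩ := hP.exists_mem_opposite hq hrP hri hx
    rw [Bool.not_not] at hpi' hx'
    obtain rfl : p' = p := mem_singleton.1 (hp ▸ mem_filter.2 ⟨hp', hpi'⟩)
    exact ⟨hx i _ hri, hx'⟩
  · rintro ⟨hxi, hx⟩
    obtain ⟨p', hp', hpi', hx'⟩ := hP.exists_mem_opposite hq hpP hpi hx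
    rw [update_idem, ← hxi, update_eq_self] at hx'
    exact ⟨p', mem_filter.2 ⟨hp', hxi ▸ hpi'⟩, hx'⟩

theorem layer_of_forall_ne_none (hP : IsPartition P q) (hq : q i = none)
    (h : ∀ p ∈ P, p i ≠ none) (b : Bool) :
    IsPartition {p ∈ P | p i = some b} (q.fix i b) := by
  refine hP.of_subset (filter_subset _ _) fun x => ?_
  rw [mem_points_fix_of_eq_none hq]
  constructor
  · rintro ⟨p, hp, hx⟩
    obtain ⟨hp, hpi⟩ := mem_filter.1 hp
    exact ⟨hx i b hpi, hP.points_subset hp hx⟩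
  · rintro ⟨rfl, hx⟩
    obtain ⟨p, hp, hxp⟩ := hP.exists_mem_points hx
    obtain ⟨e, he⟩ := Option.ne_none_iff_exists'.1 (h p hp)
    exact ⟨p, mem_filter.2 ⟨hp, hxp i e he ▸ he⟩, hxp⟩

theorem exists_isPartition_layer_not (hP : IsPartition P q) (ht : TwinFree P) (hq : q i = none)
    (hcard : #{p ∈ P | p i = some b} = 1) :
    ∃ r, IsPartition {p ∈ P | p i = some (!b)} r ∧ {p ∈ P | p i = some (!b)} ≠ {r} := by
  obtain ⟨p, hp⟩ := card_eq_one.1 hcard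
  obtain ⟨hpP, hpi⟩ := mem_filter.1 (hp ▸ mem_singleton_self p)
  refine ⟨p.fix i (!b), hP.layer_not hq hp, fun h => ht p hpP i b hpi ?_⟩
  exact (mem_filter.1 (h ▸ mem_singleton_self (p.fix i (!b)))).1

theorem five_le_card (hP : IsPartition P q) (ht : TwinFree P) (hne : P ≠ {q}) : 5 ≤ #P := by
  induction P using Finset.strongInduction generalizing q with | H P ih =>
  obtain ⟨p, hp, i, hq, hpi⟩ := hP.exists_mem_coord_ne_none hne
  have hpos := hP.card_layer_pos hq hp hpi
  have ih_layer (b : Bool) (r : Subcube ι) (hr : IsPartition {p ∈ P | p i = some b} r)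
      (hne : {p ∈ P | p i = some b} ≠ {r}) : 5 ≤ #{p ∈ P | p i = some b} := by
    refine ih _ (filter_ssubset.2 ?_) hr (ht.mono (filter_subset _ _)) hne
    obtain ⟨p', hp'⟩ := card_pos.1 (hpos !b)
    obtain ⟨hp', hpi'⟩ := mem_filter.1 hp'
    exact ⟨p', hp', by simp [hpi']⟩
  have two_or_five (b : Bool) : 2 ≤ #{p ∈ P | p i = some b} ∨ 5 ≤ #{p ∈ P | p i = some (!b)} := by
    by_contra! h
    have := hpos b
    obtain ⟨r, hr, hne⟩ := hP.exists_isPartition_layer_not (b := b) ht hq (by lia)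
    exact h.2.not_ge (ih_layer _ r hr hne)
  have hcard : #P = #{p ∈ P | p i = none} + (#{p ∈ P | p i = some true} +
      #{p ∈ P | p i = some false}) := by
    simpa using card_eq_sum_card_fiberwise (f := fun p : Subcube ι => p i) (t := univ)
      (s := P) (by simp)
  have htrue := two_or_five true
  have hfalse := two_or_five false
  simp only [Bool.not_true, Bool.not_false] at htrue hfalse
  by_contra! hlt
  have hstar : ∀ p ∈ P, p i ≠ none := by
    rw [← filter_eq_empty_iff, ← card_eq_zero]
    lia
  have hface := ih_layer true _ (hP.layer_of_forall_ne_none hq hstar true) fun h => by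
    have := congrArg card h
    rw [card_singleton] at this
    lia
  lia

theorem exists_five_le_card_layer_or (hP : IsPartition P q) (ht : TwinFree P) (hne : P ≠ {q})
    (hq : q i = none) :
    (∃ o, 5 ≤ #{p ∈ P | p i = o}) ∨ ∀ b, 2 ≤ #{p ∈ P | p i = some b} := by
  by_cases h : ∀ p ∈ P, p i = none
  · exact .inl ⟨none, by simpa only [filter_true_of_mem h] using hP.five_le_card ht hne⟩
  · push Not at h
    obtain ⟨p, hp, hpi⟩ := h
    refine or_iff_not_imp_right.2 fun h => ?_
    obtain ⟨b, hb⟩ := not_forall.1 h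
    have := hP.card_layer_pos hq hp hpi b
    obtain ⟨r, hr, hrne⟩ := hP.exists_isPartition_layer_not (b := b) ht hq (by lia)
    exact ⟨some !b, hr.five_le_card (ht.mono (filter_subset _ _)) hrne⟩

end Layers

end IsPartition

end Subcube

/-! ### Polybox codes over a four-letter alphabet -/

section Words

variable {S : Type*} {c : S → S}

/-- The letters `s` and `t` belong to different complementary pairs. -/
def Crossing (c : S → S) (s t : S) : Prop :=
  t ≠ s ∧ t ≠ c s

/-- Complementation `c` makes `S` an alphabet with exactly four letters. -/
structure FourLetterAlphabet (c : S → S) : Prop where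
  involutive : Involutive c
  compl_ne : ∀ s, c s ≠ s
  card_eq : Nat.card S = 4

namespace Crossing

variable {s t : S}

theorem symm (hc : Involutive c) (h : Crossing c s t) : Crossing c t s :=
  ⟨h.1.symm, fun hst => h.2 (by rw [hst, hc])⟩

theorem compl_right (hc : Involutive c) (h : Crossing c s t) : Crossing c s (c t) :=
  ⟨fun hst => h.2 (by rw [← hst, hc]), hc.injective.ne h.1⟩

end Crossing

namespace FourLetterAlphabet

theorem finite (hS : FourLetterAlphabet c) : Finite S :=
  Nat.finite_of_card_ne_zero (by simp [hS.card_eq])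

theorem exists_crossing (hS : FourLetterAlphabet c) (s : S) : ∃ t, Crossing c s t := by
  have hlt : ({s, c s} : Set S).ncard < (Set.univ : Set S).ncard := by
    rw [Set.ncard_univ, hS.card_eq]
    exact (Set.ncard_insert_le _ _).trans_lt (by simp)
  obtain ⟨t, -, ht⟩ := Set.exists_mem_notMem_of_ncard_lt_ncard hlt
  exact ⟨t, by simpa [Crossing] using ht⟩

theorem eq_of_crossing (hS : FourLetterAlphabet c) {s t : S} (h : Crossing c s t) (r : S) :
    r = s ∨ r = c s ∨ r = t ∨ r = c t := by
  classical
  have := hS.finite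
  have := Fintype.ofFinite S
  have h' := h.compl_right hS.involutive
  have hcard : #{s, c s, t, c t} = 4 := by
    rw [card_insert_of_notMem, card_insert_of_notMem, card_pair (hS.compl_ne t).symm]
    · simp [h.2.symm, h'.2.symm]
    · simp [(hS.compl_ne s).symm, h.1.symm, h'.1.symm]
  have huniv := eq_univ_of_card {s, c s, t, c t} (by
    rw [hcard, ← Nat.card_eq_fintype_card, hS.card_eq])
  simpa [← huniv] using mem_univ r

theorem pair_mem_ESet (hS : FourLetterAlphabet c) {s t : S} (h : Crossing c s t) :
    {s, t} ∈ ESet c := by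
  intro r
  have h' := h.compl_right hS.involutive
  have hinv := hS.involutive
  have hne := hS.compl_ne
  simp only [Set.mem_insert_iff, Set.mem_singleton_iff]
  rcases hS.eq_of_crossing h r with rfl | rfl | rfl | rfl
  · simp [hne, h.2.symm]
  · simp [hinv _, hne, h.2.symm]
  · simp [hne, h'.1]
  · simp [hinv _, h'.1, hne]

end FourLetterAlphabet

theorem Eltr_nonempty (hinv : Involutive c) (hne : ∀ s, c s ≠ s) (s : S) :
    (Eltr c s).Nonempty := by
  classical
  let := linearOrderOfSTO (WellOrderingRel (α := S))
  -- Keep `s` itself, and the smaller letter of every other complementary pair.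
  refine ⟨{r | r = s ∨ r ≠ c s ∧ r < c r}, fun r => ?_, .inl rfl⟩
  have := hinv r
  have := hinv s
  have := hne r
  have := hne s
  grind

theorem realize_nonempty (hinv : Involutive c) (hne : ∀ s, c s ≠ s) {d : ℕ} (v : Fin d → S) :
    (realize c v).Nonempty := by
  choose B hB using Eltr_nonempty hinv hne
  exact ⟨fun i => B (v i), fun i => hB (v i)⟩

/-- The set of words `V` contains no twin pair. -/
def TwinFree (c : S → S) {d : ℕ} (V : Set (Fin d → S)) : Prop :=
  ∀ u ∈ V, ∀ v ∈ V, ¬ TwinPair c u v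

/-- The polybox `⋃_{v ∈ V} v̌` realizing the set of words `V`; equivalence of `V` and `W` is by
definition the equality of their polyboxes. -/
def polybox (c : S → S) {d : ℕ} (V : Set (Fin d → S)) : Set (Fin d → Set S) :=
  ⋃ v ∈ V, realize c v

section Polybox

variable {d : ℕ} {U V W : Set (Fin d → S)} {B : Fin d → Set S}

theorem TwinFree.mono (hV : TwinFree c V) (h : U ⊆ V) : TwinFree c U :=
  fun u hu v hv => hV u (h hu) v (h hv)

theorem PolyboxCode.mono (hV : PolyboxCode c V) (h : U ⊆ V) : PolyboxCode c U :=
  fun u hu v hv => hV u (h hu) v (h hv)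

theorem mem_polybox : B ∈ polybox c V ↔ ∃ v ∈ V, B ∈ realize c v := by
  simp only [polybox, Set.mem_iUnion₂, exists_prop]

theorem polybox_union : polybox c (U ∪ V) = polybox c U ∪ polybox c V :=
  Set.biUnion_union U V (realize c)

theorem Equivalent.nonempty (h : Equivalent c V W) (hinv : Involutive c) (hne : ∀ s, c s ≠ s)
    (hV : V.Nonempty) : W.Nonempty := by
  obtain ⟨v, hv⟩ := hV
  obtain ⟨B, hB⟩ := realize_nonempty hinv hne v
  obtain ⟨w, hw, -⟩ := mem_polybox.1 (h.subset (mem_polybox.2 ⟨v, hv, hB⟩))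
  exact ⟨w, hw⟩

theorem PolyboxCode.pairwiseDisjoint_realize (hV : PolyboxCode c V) :
    V.PairwiseDisjoint (realize c) := by
  intro u hu v hv huv
  obtain ⟨j, hj⟩ := hV u hu v hv huv
  refine Set.disjoint_left.2 fun B hBu hBv => ?_
  exact ((hBu j).1 (u j)).1 (hBu j).2 (hj ▸ (hBv j).2)

theorem PolyboxCode.disjoint_polybox (hUV : PolyboxCode c (U ∪ V)) (h : Disjoint U V) :
    Disjoint (polybox c U) (polybox c V) := by
  simp only [polybox, Set.disjoint_iUnion_left, Set.disjoint_iUnion_right]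
  exact fun v hv u hu =>
    hUV.pairwiseDisjoint_realize (.inl hu) (.inr hv) (h.ne_of_mem hu hv)

theorem Equivalent.of_union_left (h : Equivalent c (U ∪ V) (U ∪ W))
    (hUV : PolyboxCode c (U ∪ V)) (hUW : PolyboxCode c (U ∪ W))
    (hV : Disjoint U V) (hW : Disjoint U W) : Equivalent c V W := by
  have hunion : polybox c U ∪ polybox c V = polybox c U ∪ polybox c W := by
    rw [← polybox_union, ← polybox_union]
    exact h
  calc polybox c V = (polybox c U ∪ polybox c V) \ polybox c U :=
        (hUV.disjoint_polybox hV).sup_sdiff_cancel_left.symm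
    _ = (polybox c U ∪ polybox c W) \ polybox c U := by rw [hunion]
    _ = polybox c W := (hUW.disjoint_polybox hW).sup_sdiff_cancel_left

theorem Equivalent.sdiff (h : Equivalent c V W) (hV : PolyboxCode c V) (hW : PolyboxCode c W) :
    Equivalent c (V \ W) (W \ V) := by
  have hVeq : V ∩ W ∪ V \ W = V := Set.inter_union_sdiff V W
  have hWeq : V ∩ W ∪ W \ V = W := by rw [Set.inter_comm, Set.inter_union_sdiff]
  refine Equivalent.of_union_left (U := V ∩ W) (by rwa [hVeq, hWeq]) (by rwa [hVeq])
    (by rwa [hWeq]) ?_ ?_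
  · exact Set.disjoint_sdiff_right.mono_left Set.inter_subset_right
  · exact Set.disjoint_sdiff_right.mono_left Set.inter_subset_left

theorem rigid_of_forall_disjoint (hinv : Involutive c) (hne : ∀ s, c s ≠ s) (hV : PolyboxCode c V)
    (h : ∀ U ⊆ V, ∀ W, PolyboxCode c W → Equivalent c U W → Disjoint U W → W = ∅) :
    Rigid c V := by
  intro W hW hVW
  have hdiff := hVW.sdiff hV hW
  have hWV : W \ V = ∅ := h (V \ W) Set.sdiff_subset (W \ V) (hW.mono Set.sdiff_subset) hdiff
    disjoint_sdiff_sdiff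
  have hVW : V \ W = ∅ := by
    by_contra! hVWne
    exact (hdiff.nonempty hinv hne hVWne).ne_empty hWV
  exact (Set.sdiff_eq_empty.1 hWV).antisymm (Set.sdiff_eq_empty.1 hVW)

theorem rigid_of_fin_zero (V : Set (Fin 0 → S)) : Rigid c V := by
  intro W _ hVW
  have mem_iff (X : Set (Fin 0 → S)) (v : Fin 0 → S) : v ∈ X ↔ Fin.elim0 ∈ polybox c X := by
    rw [mem_polybox]
    refine ⟨fun hv => ⟨v, hv, fun i => i.elim0⟩, ?_⟩
    rintro ⟨u, hu, -⟩
    rwa [Subsingleton.elim v u]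
  exact Set.ext fun v => (mem_iff W v).trans ((Set.ext_iff.1 hVW.symm _).trans (mem_iff V v).symm)

end Polybox

/-- The slice of `V ⊆ S^(d+1)` at the letter `s`: the words of `V` with first letter `s`, with that
letter removed. -/
def headSlice {d : ℕ} (V : Set (Fin (d + 1) → S)) (s : S) : Set (Fin d → S) :=
  {u | Fin.cons (α := fun _ => S) s u ∈ V}

section Slice

variable {d : ℕ} {V W : Set (Fin (d + 1) → S)} {s t : S}

theorem tail_mem_headSlice_iff {v : Fin (d + 1) → S} : Fin.tail v ∈ headSlice V (v 0) ↔ v ∈ V := by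
  simp only [headSlice, Set.mem_ofPred_eq, Fin.cons_self_tail]

theorem headSlice_injective :
    Injective (headSlice : Set (Fin (d + 1) → S) → S → Set (Fin d → S)) := by
  intro V W h
  ext v
  rw [← tail_mem_headSlice_iff, h, tail_mem_headSlice_iff]

theorem ncard_headSlice_le [Finite S] (V : Set (Fin (d + 1) → S)) (s : S) :
    (headSlice V s).ncard ≤ V.ncard :=
  Set.ncard_le_ncard_of_injOn (Fin.cons (α := fun _ => S) s) (fun _ hu => hu)
    (Fin.cons_right_injective (α := fun _ => S) s).injOn

theorem TwinFree.twinFree_headSlice (hV : TwinFree c V) (s : S) : TwinFree c (headSlice V s) := by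
  rintro u hu v hv ⟨j, hj, huv⟩
  refine hV _ hu _ hv ⟨j.succ, by simpa using hj, Fin.cases (fun _ => rfl) fun i hi => ?_⟩
  simpa using huv i (fun h => hi (h ▸ rfl))

theorem TwinFree.disjoint_headSlice_compl (hV : TwinFree c V) (s : S) :
    Disjoint (headSlice V s) (headSlice V (c s)) :=
  Set.disjoint_left.2 fun _ hu hu' =>
    hV _ hu _ hu' ⟨0, rfl, Fin.cases (fun h => absurd rfl h) fun _ _ => rfl⟩

theorem PolyboxCode.dichotomous_of_mem_headSlice (hV : PolyboxCode c V) (hst : t ≠ c s)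
    {u v : Fin d → S} (hu : u ∈ headSlice V s) (hv : v ∈ headSlice V t) (hne : s ≠ t ∨ u ≠ v) :
    Dichotomous c u v := by
  obtain ⟨j, hj⟩ := hV _ hu _ hv (by rwa [Ne, Fin.cons_inj, not_and_or])
  cases j using Fin.cases with
  | zero => exact absurd hj hst
  | succ j => exact ⟨j, hj⟩

theorem PolyboxCode.polyboxCode_headSlice (hV : PolyboxCode c V) (hne : ∀ s, c s ≠ s) (s : S) :
    PolyboxCode c (headSlice V s) :=
  fun _ hu _ hv huv => hV.dichotomous_of_mem_headSlice (hne s).symm hu hv (.inr huv)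

theorem PolyboxCode.polyboxCode_headSlice_union (hV : PolyboxCode c V) (hinv : Involutive c)
    (hne : ∀ s, c s ≠ s) (h : Crossing c s t) :
    PolyboxCode c (headSlice V s ∪ headSlice V t) := by
  rintro u (hu | hu) v (hv | hv) huv
  · exact hV.polyboxCode_headSlice hne s u hu v hv huv
  · exact hV.dichotomous_of_mem_headSlice h.2 hu hv (.inr huv)
  · exact hV.dichotomous_of_mem_headSlice (h.symm hinv).2 hu hv (.inr huv)
  · exact hV.polyboxCode_headSlice hne t u hu v hv huv

theorem PolyboxCode.disjoint_headSlice (hV : PolyboxCode c V) (hne : ∀ s, c s ≠ s)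
    (h : Crossing c s t) : Disjoint (headSlice V s) (headSlice V t) := by
  refine Set.disjoint_left.2 fun u hu hu' => ?_
  obtain ⟨j, hj⟩ := hV.dichotomous_of_mem_headSlice h.2 hu hu' (.inl h.1.symm)
  exact hne (u j) hj.symm

theorem cons_mem_polybox_iff {A : Set S} (hA : A ∈ ESet c) {B : Fin d → Set S} :
    Fin.cons A B ∈ polybox c V ↔ ∃ s ∈ A, B ∈ polybox c (headSlice V s) := by
  simp only [mem_polybox, Fin.exists_fin_succ_pi, realize, Eltr, Set.mem_ofPred_eq,
    Fin.forall_fin_succ, Fin.cons_zero, Fin.cons_succ, hA, true_and, headSlice]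
  tauto

theorem Equivalent.headSlice_union (h : Equivalent c V W) (hS : FourLetterAlphabet c)
    (hst : Crossing c s t) :
    Equivalent c (headSlice V s ∪ headSlice V t) (headSlice W s ∪ headSlice W t) := by
  have key (X : Set (Fin (d + 1) → S)) (B : Fin d → Set S) :
      B ∈ polybox c (headSlice X s ∪ headSlice X t) ↔ Fin.cons {s, t} B ∈ polybox c X := by
    simp [cons_mem_polybox_iff (hS.pair_mem_ESet hst), polybox_union]
  exact Set.ext fun B => (key V B).trans ((Set.ext_iff.1 h _).trans (key W B).symm)

end Slice

section RigidSlices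

variable {d : ℕ} {V W : Set (Fin (d + 1) → S)}

theorem eq_of_headSlice_eq_empty (hS : FourLetterAlphabet c) (hV : PolyboxCode c V)
    (htf : TwinFree c V) (hrig : ∀ s, Rigid c (headSlice V s)) (hW : PolyboxCode c W)
    (hVW : Equivalent c V W) {s : S} (hs : headSlice V s = ∅) : W = V := by
  have hinv := hS.involutive
  have hne := hS.compl_ne
  have union_eq {t : S} (hst : Crossing c s t) : headSlice W t ∪ headSlice W s = headSlice V t := by
    have hts := hst.symm hinv
    have h := hVW.headSlice_union hS hts
    rw [hs, Set.union_empty] at h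
    exact hrig t _ (hW.polyboxCode_headSlice_union hinv hne hts) h
  obtain ⟨t, hst⟩ := hS.exists_crossing s
  have hst' := hst.compl_right hinv
  have hWs : headSlice W s = ∅ := by
    refine Set.subset_eq_empty (Set.subset_inter ?_ ?_) (htf.disjoint_headSlice_compl t).inter_eq
    · exact union_eq hst ▸ Set.subset_union_right
    · exact union_eq hst' ▸ Set.subset_union_right
  have eq_of_crossing {t : S} (hst : Crossing c s t) : headSlice W t = headSlice V t := by
    rw [← union_eq hst, hWs, Set.union_empty]
  have eq_compl : headSlice W (c s) = headSlice V (c s) := by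
    have hts := (hst.symm hinv).compl_right hinv
    have h := hVW.headSlice_union hS hts
    rw [eq_of_crossing hst] at h
    refine hrig _ _ (hW.polyboxCode_headSlice hne _) <|
      h.of_union_left (hV.polyboxCode_headSlice_union hinv hne hts) ?_
        (hV.disjoint_headSlice hne hts) ?_
    · exact eq_of_crossing hst ▸ hW.polyboxCode_headSlice_union hinv hne hts
    · exact eq_of_crossing hst ▸ hW.disjoint_headSlice hne hts
  refine headSlice_injective (funext fun r => ?_)
  rcases hS.eq_of_crossing hst r with rfl | rfl | rfl | rfl
  · rw [hWs, hs]
  · exact eq_compl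
  · exact eq_of_crossing hst
  · exact eq_of_crossing hst'

theorem headSlice_eq_empty_of_headSlices_eq_empty (hS : FourLetterAlphabet c) (hV : PolyboxCode c V)
    (htf : TwinFree c V) (hVW : Equivalent c V W) {s : S} (hrig : Rigid c (headSlice V s))
    (hs : headSlice W s = ∅) (hs' : headSlice W (c s) = ∅) : headSlice V s = ∅ := by
  have hinv := hS.involutive
  have hne := hS.compl_ne
  obtain ⟨t, hst⟩ := hS.exists_crossing s
  have hts := hst.symm hinv
  have hts' := hts.compl_right hinv
  have h : Equivalent c (headSlice V t ∪ headSlice V s) (headSlice V t ∪ headSlice V (c s)) :=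
    (hVW.headSlice_union hS hts).trans
      (by simpa only [hs, hs'] using! (hVW.headSlice_union hS hts').symm)
  have heq : headSlice V (c s) = headSlice V s := hrig _ (hV.polyboxCode_headSlice hne _) <|
    h.of_union_left (hV.polyboxCode_headSlice_union hinv hne hts)
      (hV.polyboxCode_headSlice_union hinv hne hts')
      (hV.disjoint_headSlice hne hts) (hV.disjoint_headSlice hne hts')
  exact disjoint_self.1 (heq ▸ htf.disjoint_headSlice_compl s)

end RigidSlices

/-! ### Letter counts and partitions of boxes -/

/-- The number of words of `V` with the letter `s` at coordinate `i`. -/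
noncomputable def letterCount {d : ℕ} (V : Set (Fin d → S)) (i : Fin d) (s : S) : ℕ :=
  {v ∈ V | v i = s}.ncard

theorem sum_letterCount [Fintype S] {d : ℕ} (V : Set (Fin d → S)) (i : Fin d) :
    ∑ s, letterCount V i s = V.ncard := by
  classical
  have := Fintype.ofFinite V
  simp only [letterCount, Set.ncard_eq_toFinset_card']
  rw [card_eq_sum_card_fiberwise (f := fun v : Fin d → S => v i) (t := univ) (by simp)]
  refine sum_congr rfl fun s _ => congrArg card ?_
  ext v
  simp

theorem letterCount_add_three_le (hS : FourLetterAlphabet c) {d : ℕ} {V : Set (Fin d → S)}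
    {i : Fin d} (h : ∀ s, 1 ≤ letterCount V i s) (s : S) :
    letterCount V i s + 3 ≤ V.ncard := by
  classical
  have := hS.finite
  have := Fintype.ofFinite S
  rw [← sum_letterCount V i, ← add_sum_erase univ _ (mem_univ s)]
  have hcard : #(univ.erase s) = 3 := by
    rw [card_erase_of_mem (mem_univ s), card_univ, ← Nat.card_eq_fintype_card, hS.card_eq]
  have := card_nsmul_le_sum (univ.erase s) (letterCount V i) 1 fun s _ => h s
  simpa [hcard] using this

theorem mul_four_le_ncard (hS : FourLetterAlphabet c) {d : ℕ} {V : Set (Fin d → S)} {i : Fin d}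
    {k : ℕ} (h : ∀ s, k ≤ letterCount V i s) : 4 * k ≤ V.ncard := by
  have := hS.finite
  have := Fintype.ofFinite S
  rw [← sum_letterCount V i, ← hS.card_eq, Nat.card_eq_fintype_card, ← card_univ]
  exact card_nsmul_le_sum univ _ k fun s _ => h s

theorem one_le_letterCount_zero [Finite S] {d : ℕ} {V : Set (Fin (d + 1) → S)} {s : S}
    (h : (headSlice V s).Nonempty) : 1 ≤ letterCount V 0 s := by
  obtain ⟨u, hu⟩ := h
  exact (Set.ncard_pos (Set.toFinite _)).2 ⟨Fin.cons s u, hu, rfl⟩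

/-- The letters `s`, `t`, `t'` indexed by `Option Bool`. When `s` and `t` cross, these are the
letters whose boxes meet `Es`, and `E(letter o) ∩ Es` is the subset of the two-point set `Es`
prescribed by `o`. -/
def letter (c : S → S) (s t : S) : Option Bool → S
  | none => s
  | some true => t
  | some false => c t

/-- The word with `i`-th letter `w i`, `τ i` or `(τ i)'` according to `p i`. For `τ` crossing `w`
everywhere, its box cuts out of the cube `w̌` the subcube `p`. -/
def subcubeWord (c : S → S) {d : ℕ} (w τ : Fin d → S) (p : Subcube (Fin d)) : Fin d → S :=
  fun i => letter c (w i) (τ i) (p i)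

/-- The point of the box `w̌` with coordinates `x`, when `w̌` is viewed as a discrete cube by means
of a word `τ` crossing `w` everywhere. -/
def boxPoint (c : S → S) {d : ℕ} (w τ : Fin d → S) (x : Fin d → Bool) : Fin d → Set S :=
  fun i => {w i, letter c (w i) (τ i) (some (x i))}

section Trace

theorem letter_some_not (hinv : Involutive c) (s t : S) (b : Bool) :
    letter c s t (some !b) = c (letter c s t (some b)) := by
  cases b <;> simp [letter, hinv t]

theorem Crossing.letter_some {s t : S} (h : Crossing c s t) (hinv : Involutive c) (b : Bool) :
    Crossing c s (letter c s t (some b)) := by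
  cases b
  exacts [h.compl_right hinv, h]

theorem Crossing.letter_injective {s t : S} (h : Crossing c s t) (hS : FourLetterAlphabet c) :
    Injective (letter c s t) := by
  have h' := h.compl_right hS.involutive
  have hne := hS.compl_ne t
  rintro (_ | _ | _) (_ | _ | _) <;>
    simp [letter, h.1, h.1.symm, h'.1, h'.1.symm, hne, hne.symm]

variable {d : ℕ} {V : Set (Fin d → S)} {w τ : Fin d → S}

theorem subcubeWord_injective (hS : FourLetterAlphabet c) (hτ : ∀ i, Crossing c (w i) (τ i)) :
    Injective (subcubeWord c w τ) :=
  fun _ _ h => funext fun i => (hτ i).letter_injective hS (congrFun h i)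

theorem boxPoint_mem_ESet (hS : FourLetterAlphabet c) (hτ : ∀ i, Crossing c (w i) (τ i))
    (x : Fin d → Bool) (i : Fin d) : boxPoint c w τ x i ∈ ESet c :=
  hS.pair_mem_ESet ((hτ i).letter_some hS.involutive (x i))

theorem boxPoint_mem_realize_iff (hS : FourLetterAlphabet c) (hτ : ∀ i, Crossing c (w i) (τ i))
    {x : Fin d → Bool} {v : Fin d → S} :
    boxPoint c w τ x ∈ realize c v ↔ ∀ i, v i ∈ boxPoint c w τ x i :=
  forall_congr' fun i => and_iff_right (boxPoint_mem_ESet hS hτ x i)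

theorem boxPoint_mem_realize_subcubeWord_iff (hS : FourLetterAlphabet c)
    (hτ : ∀ i, Crossing c (w i) (τ i)) {x : Fin d → Bool} {p : Subcube (Fin d)} :
    boxPoint c w τ x ∈ realize c (subcubeWord c w τ p) ↔ x ∈ p.points := by
  rw [boxPoint_mem_realize_iff hS hτ]
  refine forall_congr' fun i => ?_
  have hinj := (hτ i).letter_injective hS
  have hnone : w i = letter c (w i) (τ i) none := rfl
  rw [boxPoint, subcubeWord, Set.mem_insert_iff, Set.mem_singleton_iff, hinj.eq_iff]
  nth_rw 2 [hnone]
  rw [hinj.eq_iff]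
  cases p i <;> simp [eq_comm]

theorem exists_subcubeWord_eq (hS : FourLetterAlphabet c) (hτ : ∀ i, Crossing c (w i) (τ i))
    {x : Fin d → Bool} {v : Fin d → S} (h : boxPoint c w τ x ∈ realize c v) :
    ∃ p, subcubeWord c w τ p = v := by
  have hletter (i : Fin d) : ∃ o, letter c (w i) (τ i) o = v i := by
    rcases (boxPoint_mem_realize_iff hS hτ).1 h i with hi | hi
    · exact ⟨none, hi.symm⟩
    · exact ⟨some (x i), hi.symm⟩
  choose p hp using hletter
  exact ⟨p, funext hp⟩

open Classical in
/-- The subcubes which the words of `V` cut out of the cube `w̌`. -/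
noncomputable def trace (c : S → S) (w τ : Fin d → S) (V : Set (Fin d → S)) :
    Finset (Subcube (Fin d)) :=
  {p | subcubeWord c w τ p ∈ V}

theorem mem_trace {p : Subcube (Fin d)} : p ∈ trace c w τ V ↔ subcubeWord c w τ p ∈ V := by
  simp [trace]

theorem trace_isPartition (hS : FourLetterAlphabet c) (hτ : ∀ i, Crossing c (w i) (τ i))
    (hV : PolyboxCode c V) (hw : realize c w ⊆ polybox c V) :
    Subcube.IsPartition (trace c w τ V) (fun _ => none) where
  iUnion_points := by
    refine Set.Subset.antisymm (fun _ _ _ _ h => by simp at h) fun x _ => ?_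
    have hx : boxPoint c w τ x ∈ realize c w :=
      (boxPoint_mem_realize_iff hS hτ).2 fun i => Set.mem_insert _ _
    obtain ⟨v, hv, hxv⟩ := mem_polybox.1 (hw hx)
    obtain ⟨p, rfl⟩ := exists_subcubeWord_eq hS hτ hxv
    exact Set.mem_biUnion (mem_trace.2 hv) ((boxPoint_mem_realize_subcubeWord_iff hS hτ).1 hxv)
  pairwiseDisjoint := by
    intro p hp p' hp' hne
    refine Set.disjoint_left.2 fun x hx hx' => ?_
    rw [← boxPoint_mem_realize_subcubeWord_iff hS hτ] at hx hx'
    exact (hV.pairwiseDisjoint_realize (mem_trace.1 hp) (mem_trace.1 hp')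
      ((subcubeWord_injective hS hτ).ne hne)).le_bot ⟨hx, hx'⟩

theorem TwinFree.trace (hV : TwinFree c V) (hinv : Involutive c) :
    Subcube.TwinFree (trace c w τ V) := by
  intro p hp i b hb hmem
  refine hV _ (mem_trace.1 hp) _ (mem_trace.1 hmem) ⟨i, ?_, fun j hj => ?_⟩
  · simp [subcubeWord, Subcube.fix, Option.mem_def.1 hb, letter_some_not hinv]
  · simp [subcubeWord, Subcube.fix, update_of_ne hj]

theorem card_layer_trace_le [Finite S] (hinj : Injective (subcubeWord c w τ)) (i : Fin d)
    (o : Option Bool) :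
    #{p ∈ trace c w τ V | p i = o} ≤ letterCount V i (letter c (w i) (τ i) o) := by
  rw [← Set.ncard_coe_finset]
  refine Set.ncard_le_ncard_of_injOn (subcubeWord c w τ) (fun p hp => ?_) hinj.injOn
  obtain ⟨hpV, hpi⟩ := mem_filter.1 hp
  exact ⟨mem_trace.1 hpV, congrArg (letter c (w i) (τ i)) hpi⟩

theorem exists_five_le_letterCount_or (hS : FourLetterAlphabet c) (hV : PolyboxCode c V)
    (htf : TwinFree c V) {w : Fin d → S} (hwV : w ∉ V) (hw : realize c w ⊆ polybox c V)
    (i : Fin d) :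
    (∃ s, 5 ≤ letterCount V i s) ∨ ∀ t, Crossing c (w i) t → 2 ≤ letterCount V i t := by
  have := hS.finite
  choose τ hτ using fun i => hS.exists_crossing (w i)
  have hle := card_layer_trace_le (V := V) (subcubeWord_injective hS hτ) i
  have hne : trace c w τ V ≠ {fun _ => none} := fun h =>
    hwV (mem_trace.1 (h ▸ mem_singleton_self fun _ => none))
  refine ((trace_isPartition hS hτ hV hw).exists_five_le_card_layer_or
    (htf.trace hS.involutive) hne rfl (i := i)).imp ?_ fun h t ht => ?_
  · rintro ⟨o, ho⟩
    exact ⟨_, ho.trans (hle o)⟩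
  · rcases hS.eq_of_crossing (hτ i) t with rfl | rfl | rfl | rfl
    · exact absurd rfl ht.1
    · exact absurd rfl ht.2
    · exact (h true).trans (hle (some true))
    · exact (h false).trans (hle (some false))

end Trace

theorem eq_empty_of_disjoint_of_equivalent (hS : FourLetterAlphabet c) {d : ℕ}
    {V W : Set (Fin (d + 1) → S)} (hV : PolyboxCode c V) (htf : TwinFree c V)
    (hcard : V.ncard ≤ 7) (hrig : ∀ s, Rigid c (headSlice V s)) (hW : PolyboxCode c W)
    (hVW : Equivalent c V W) (hdisj : Disjoint V W) : W = ∅ := by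
  by_contra hW₀
  have := hS.finite
  have hslice (s : S) : (headSlice V s).Nonempty := by
    by_contra! hs
    have hWV := eq_of_headSlice_eq_empty hS hV htf hrig hW hVW hs
    exact hW₀ (disjoint_self.1 (hWV ▸ hdisj))
  have hcross (t : S) : ∃ w ∈ W, Crossing c (w 0) t := by
    obtain ⟨s, hs⟩ := hS.exists_crossing t
    by_contra! h
    refine (hslice s).ne_empty (headSlice_eq_empty_of_headSlices_eq_empty hS hV htf hVW (hrig s)
      ?_ ?_) <;> refine Set.eq_empty_of_forall_notMem fun u hu => h _ hu ?_
    · exact hs.symm hS.involutive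
    · exact (hs.compl_right hS.involutive).symm hS.involutive
  have hone (s : S) : 1 ≤ letterCount V 0 s := one_le_letterCount_zero (hslice s)
  have htwo (t : S) : 2 ≤ letterCount V 0 t := by
    obtain ⟨w, hw, hwt⟩ := hcross t
    have hcover : realize c w ⊆ polybox c V := fun B hB =>
      hVW.superset (mem_polybox.2 ⟨w, hw, hB⟩)
    rcases exists_five_le_letterCount_or hS hV htf (hdisj.notMem_of_mem_right hw) hcover 0 with
      ⟨s, hs⟩ | h
    · have := letterCount_add_three_le hS hone s
      lia
    · exact h t hwt
  have := mul_four_le_ncard hS htwo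
  lia

end Words

/-- Over an alphabet `S = {a, a', b, b'}` with exactly four letters, every
polybox code `V ⊆ S^d` without twin pairs with `|V| ≤ 7` is rigid. -/
theorem rigid_of_card_le_seven {S : Type*} [Fintype S] (c : S → S)
    (hinv : ∀ s, c (c s) = s) (hne : ∀ s, c s ≠ s)
    (hS : Fintype.card S = 4) {d : ℕ}
    (V : Set (Fin d → S)) (hV : PolyboxCode c V)
    (hVtf : ∀ u ∈ V, ∀ v ∈ V, ¬ TwinPair c u v)
    (hcard : V.ncard ≤ 7) :
    Rigid c V := by
  have hS : FourLetterAlphabet c := ⟨hinv, hne, Nat.card_eq_fintype_card.trans hS⟩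
  induction d with
  | zero => exact rigid_of_fin_zero V
  | succ d ih =>
    refine rigid_of_forall_disjoint hinv hne hV fun U hUV W hW hUW hdisj => ?_
    have hU : PolyboxCode c U := hV.mono hUV
    have hUtf : TwinFree c U := TwinFree.mono hVtf hUV
    have hUcard : U.ncard ≤ 7 := (Set.ncard_le_ncard hUV).trans hcard
    have hrig (s : S) : Rigid c (headSlice U s) :=
      ih _ (hU.polyboxCode_headSlice hne s) (hUtf.twinFree_headSlice s)
        ((ncard_headSlice_le U s).trans hUcard)
    exact eq_empty_of_disjoint_of_equivalent hS hU hUtf hUcard hrig hW hUW hdisj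
end

section
/- Any two equivalent cliques in the d-dimensional Keller graph, each having at most 11 vertices, are equal. -/
/-- Adjacency in the `d`-dimensional Keller graph on vertex set
`{0,1,2,3}^d = (ZMod 4)^d`: two vertices are adjacent if they differ in at
least two coordinates and in some coordinate the difference is `2` mod `4`. -/
def KellerAdj {d : ℕ} (u v : Fin d → ZMod 4) : Prop :=
  2 ≤ {i | u i ≠ v i}.ncard ∧ ∃ i, u i - v i = 2

/-- `g(v, w) = ∏ᵢ (2·[vᵢ = wᵢ] + [wᵢ ∉ {vᵢ, vᵢ'}])`, where `x' = x + 2`. -/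
def kellerG {d : ℕ} (v w : Fin d → ZMod 4) : ℕ :=
  ∏ i, (2 * (if v i = w i then 1 else 0) +
    (if w i ≠ v i ∧ w i ≠ v i + 2 then 1 else 0))

/-!
Regard a word `v` as the box of all points `x` with `x i ∈ {v i, v i + 1}`, a cube of side two in
the torus `(ZMod 4)^d`. Then `g(v, w)` counts the common points of two boxes, a clique is a family
of pairwise disjoint boxes no two of which are twins (equal in all coordinates but one), and
equivalent cliques are those whose boxes have the same union. The basic estimate is that a clique
which covers a box without containing it has at least five words.

Removing common words, let `V` and `W` be disjoint. Cut them by the letter at a coordinate `i` into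
slices `A l` and `B l`, `l ∈ ZMod 4`, and forget that coordinate. Comparing the points with `i`-th
coordinate `l + 1` shows that `A l` and `A (l + 1)` together cover the same points as `B l` and
`B (l + 1)`, and each of these unions is disjoint. So the points that `A l` covers and `B l` does
not are the points that `B (l + 1)` covers and `A (l + 1)` does not. If such points exist, then the
basic estimate and the bound `11` leave only configurations in which some slice has two words, and
these are excluded by inspecting the letters of the opposing slice at a coordinate where those two
words are opposite. Hence `A l` and `B l` have the same cover. Iterating over all coordinates,
every word of `V` belongs to `W`.
-/

namespace Keller

open Finset Function

section Arc

/-- The pair of cyclically consecutive letters starting at `a`. -/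
def arc (a : ZMod 4) : Finset (ZMod 4) := {a, a + 1}

/-- Letters `a`, `c` whose arcs share exactly one point, as opposed to `a = c` (equal arcs) and
`c = a + 2` (complementary arcs). -/
abbrev Skew (a c : ZMod 4) : Prop := c ≠ a ∧ c ≠ a + 2

variable {a b c e x : ZMod 4}

lemma card_arc (a : ZMod 4) : #(arc a) = 2 := by
  revert a; decide

lemma card_arc_inter (a b : ZMod 4) :
    #(arc a ∩ arc b) = 2 * (if a = b then 1 else 0) + if b ≠ a ∧ b ≠ a + 2 then 1 else 0 := by
  revert a b; decide

lemma mem_arc_add_two_iff : x ∈ arc (a + 2) ↔ x ∉ arc a := by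
  revert a x; decide

lemma arc_subset_arc_iff : arc a ⊆ arc b ↔ a = b := by
  revert a b; decide

lemma exists_mem_arc_and_mem_arc (h : a ≠ b + 2) : ∃ x, x ∈ arc a ∧ x ∈ arc b := by
  revert a b; decide

lemma ne_add_two_of_mem_arc (ha : x ∈ arc a) (hb : x ∈ arc b) : a ≠ b + 2 := by
  revert a b x; decide

lemma add_two_ne_self (a : ZMod 4) : a + 2 ≠ a := by
  revert a; decide

lemma add_two_add_two (a : ZMod 4) : a + 2 + 2 = a := by
  revert a; decide

lemma eq_add_two_comm : a = b + 2 ↔ b = a + 2 := by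
  revert a b; decide

lemma Skew.add_two_left (h : Skew a c) : Skew (a + 2) c := by
  revert a c; decide

lemma Skew.add_two_right (h : Skew a c) : Skew a (c + 2) := by
  revert a c; decide

lemma Skew.exists_mem (h : Skew a c) : ∃ x, x ∈ arc a ∧ x ∈ arc c := by
  revert a c; decide

lemma Skew.eq_or_eq_add_two (h : Skew a c) (he : Skew a e) : e = c ∨ e = c + 2 := by
  revert a c e; decide

lemma Skew.eq_or_eq_of_mem (h : Skew a c) (ha : x ∈ arc a) (hc : x ∈ arc c) (he : x ∈ arc e) :
    e = a ∨ e = c := by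
  by_contra! hne
  obtain rfl | rfl := h.eq_or_eq_add_two ⟨hne.1, ne_add_two_of_mem_arc he ha⟩
  exacts [hne.2 rfl, mem_arc_add_two_iff.1 he hc]

lemma succ_mem_arc_iff : x + 1 ∈ arc a ↔ a = x ∨ a = x + 1 := by
  revert a x; decide

lemma ne_succ_add_two (a : ZMod 4) : a ≠ a + 1 + 2 := by
  revert a; decide

lemma add_one_ne_self (a : ZMod 4) : a + 1 ≠ a := by
  revert a; decide

end Arc

section Word

variable {ι : Type*} {A B : Finset (ι → ZMod 4)} {u v : ι → ZMod 4} {i : ι}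

/-- The boxes of the words `u` and `v` have a common point (see `meets_iff`), stated on letters:
the arcs of two letters are disjoint only if the letters are opposite. -/
def Meets (u v : ι → ZMod 4) : Prop := ∀ i, u i ≠ v i + 2

lemma not_meets_iff : ¬ Meets u v ↔ ∃ i, u i = v i + 2 := by
  simp [Meets]

lemma Meets.symm (h : Meets u v) : Meets v u := fun i hi ↦ h i (eq_add_two_comm.1 hi)

lemma Meets.refl (u : ι → ZMod 4) : Meets u u := fun i ↦ by
  generalize u i = a
  revert a; decide

/-- The boxes of the words of `A` are pairwise disjoint. -/
def IsPacking (A : Finset (ι → ZMod 4)) : Prop := ∀ u ∈ A, ∀ v ∈ A, Meets u v → u = v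

/-- A clique of the Keller graph: a packing without twins, that is, without distinct words that
agree in all coordinates but one. -/
structure IsCode (A : Finset (ι → ZMod 4)) : Prop where
  isPacking : IsPacking A
  eq_of_forall_ne : ∀ u ∈ A, ∀ v ∈ A, ∀ i, (∀ k ≠ i, u k = v k) → u = v

lemma IsCode.mono (hA : IsCode A) (h : B ⊆ A) : IsCode B where
  isPacking u hu v hv := hA.isPacking u (h hu) v (h hv)
  eq_of_forall_ne u hu v hv := hA.eq_of_forall_ne u (h hu) v (h hv)

lemma isCode_pair [Fintype ι] (huv : ¬ Meets u v) (h : ∀ k, ∃ i ≠ k, u i ≠ v i) :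
    IsCode {u, v} := by
  constructor
  · intro s hs t ht hst
    obtain rfl | rfl := mem_insert.1 hs |>.imp_right mem_singleton.1 <;>
      obtain rfl | rfl := mem_insert.1 ht |>.imp_right mem_singleton.1
    exacts [rfl, (huv hst).elim, (huv hst.symm).elim, rfl]
  · intro s hs t ht k hst
    obtain ⟨i, hik, hi⟩ := h k
    obtain rfl | rfl := mem_insert.1 hs |>.imp_right mem_singleton.1 <;>
      obtain rfl | rfl := mem_insert.1 ht |>.imp_right mem_singleton.1
    exacts [rfl, (hi (hst i hik)).elim, (hi (hst i hik).symm).elim, rfl]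

variable [DecidableEq ι]

lemma IsCode.update_notMem (hA : IsCode A) (hv : v ∈ A) {c : ZMod 4} (hc : c ≠ v i) :
    update v i c ∉ A := fun h ↦ by
  have := hA.eq_of_forall_ne _ h v hv i fun k hk ↦ update_of_ne hk _ _
  exact hc (by simpa using congrFun this i)

lemma Meets.update_self (h : Meets v u) : Meets v (update u i (v i)) := fun k ↦ by
  obtain rfl | hk := eq_or_ne k i
  · simpa using Meets.refl v k
  · simpa [hk] using h k

lemma eq_of_update_eq_update {l : ZMod 4} (h : update u i l = update v i l) (huv : u i = v i) :
    u = v := by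
  have := congrArg (update · i (u i)) h
  simp only [update_idem, update_eq_self] at this
  rwa [huv, update_eq_self] at this

end Word

section Box

variable {ι : Type*} [Fintype ι] [DecidableEq ι] {A B : Finset (ι → ZMod 4)}
  {q u v s t t' x : ι → ZMod 4} {i j : ι} {a c : ZMod 4}

/-- The cube of side two with corner `v` in the torus `ι → ZMod 4`. -/
def box (v : ι → ZMod 4) : Finset (ι → ZMod 4) := Fintype.piFinset fun i ↦ arc (v i)

/-- The union of the boxes of the words of `A`. -/
def cover (A : Finset (ι → ZMod 4)) : Finset (ι → ZMod 4) := A.biUnion box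

lemma mem_box : x ∈ box v ↔ ∀ i, x i ∈ arc (v i) := Fintype.mem_piFinset

lemma mem_cover : x ∈ cover A ↔ ∃ v ∈ A, x ∈ box v := mem_biUnion

lemma mem_box_iff_forall_ne (i : ι) :
    x ∈ box v ↔ x i ∈ arc (v i) ∧ ∀ k ≠ i, x k ∈ arc (v k) := by
  rw [mem_box]
  refine ⟨fun h ↦ ⟨h i, fun k _ ↦ h k⟩, fun h k ↦ ?_⟩
  obtain rfl | hk := eq_or_ne k i
  exacts [h.1, h.2 k hk]

lemma mem_box_update : x ∈ box (update v i c) ↔ x i ∈ arc c ∧ ∀ k ≠ i, x k ∈ arc (v k) := by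
  rw [mem_box_iff_forall_ne i, update_self]
  exact and_congr_right' (forall₂_congr fun k hk ↦ by rw [update_of_ne hk])

lemma update_mem_box : update x i a ∈ box v ↔ a ∈ arc (v i) ∧ ∀ k ≠ i, x k ∈ arc (v k) := by
  rw [mem_box_iff_forall_ne i, update_self]
  exact and_congr_right' (forall₂_congr fun k hk ↦ by rw [update_of_ne hk])

lemma meets_of_mem (hu : x ∈ box u) (hv : x ∈ box v) : Meets u v := fun i ↦
  ne_add_two_of_mem_arc (mem_box.1 hu i) (mem_box.1 hv i)

lemma meets_iff : Meets u v ↔ ∃ x, x ∈ box u ∧ x ∈ box v := by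
  refine ⟨fun h ↦ ?_, fun ⟨x, hu, hv⟩ ↦ meets_of_mem hu hv⟩
  choose x hx using fun i ↦ exists_mem_arc_and_mem_arc (h i)
  exact ⟨x, mem_box.2 fun i ↦ (hx i).1, mem_box.2 fun i ↦ (hx i).2⟩

lemma box_nonempty (v : ι → ZMod 4) : (box v).Nonempty :=
  let ⟨x, hx, _⟩ := meets_iff.1 (Meets.refl v); ⟨x, hx⟩

lemma apply_eq_of_forall_mem_arc (h : ∀ x ∈ box u, x i ∈ arc a) : u i = a := by
  obtain ⟨x, hx⟩ := box_nonempty u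
  refine arc_subset_arc_iff.1 fun p hp ↦ ?_
  simpa using h (update x i p) (update_mem_box.2 ⟨hp, fun k _ ↦ mem_box.1 hx k⟩)

lemma box_subset_cover (hv : v ∈ A) : box v ⊆ cover A := subset_biUnion_of_mem box hv

lemma cover_mono (h : A ⊆ B) : cover A ⊆ cover B := biUnion_subset_biUnion_of_subset_left box h

lemma cover_union (A B : Finset (ι → ZMod 4)) : cover (A ∪ B) = cover A ∪ cover B :=
  union_biUnion

/-! ### Counting points -/

lemma card_box (v : ι → ZMod 4) : #(box v) = 2 ^ Fintype.card ι := by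
  simp [box, Fintype.card_piFinset, card_arc]

lemma IsPacking.card_cover_inter_piFinset (hA : IsPacking A) (D : ι → Finset (ZMod 4)) :
    #(cover A ∩ Fintype.piFinset D) = ∑ v ∈ A, ∏ i, #(arc (v i) ∩ D i) := by
  rw [cover, biUnion_inter, card_biUnion]
  · refine sum_congr rfl fun v _ ↦ ?_
    rw [box, ← Fintype.piFinset_inter, Fintype.card_piFinset]
  · refine fun u hu v hv huv ↦ disjoint_left.2 fun x hxu hxv ↦ huv ?_
    exact hA u hu v hv (meets_of_mem (mem_inter.1 hxu).1 (mem_inter.1 hxv).1)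

lemma IsPacking.card_cover (hA : IsPacking A) : #(cover A) = #A * 2 ^ Fintype.card ι := by
  simpa [card_arc] using hA.card_cover_inter_piFinset fun _ ↦ univ

lemma IsPacking.card_eq_of_cover_eq (hA : IsPacking A) (hB : IsPacking B)
    (h : cover A = cover B) : #A = #B := by
  have := hA.card_cover.symm.trans ((congrArg card h).trans hB.card_cover)
  exact Nat.eq_of_mul_eq_mul_right (by positivity) this

lemma IsPacking.card_cover_inter_hyperplane (hA : IsPacking A) (k : ι) (p : ZMod 4) :
    #(cover A ∩ Fintype.piFinset (update (fun _ ↦ univ) k {p})) =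
      #{v ∈ A | p ∈ arc (v k)} * 2 ^ #(univ.erase k) := by
  rw [hA.card_cover_inter_piFinset, card_filter, sum_mul]
  refine sum_congr rfl fun v _ ↦ ?_
  rw [← mul_prod_erase _ _ (mem_univ k), update_self]
  congr 1
  · split_ifs with hp <;> simp [hp]
  · exact prod_eq_pow_card fun i hi ↦ by
      rw [update_of_ne (ne_of_mem_erase hi), inter_univ, card_arc]

lemma IsPacking.card_filter_mem_arc_eq_of_cover_eq (hA : IsPacking A) (hB : IsPacking B)
    (h : cover A = cover B) (k : ι) (p : ZMod 4) :
    #{v ∈ A | p ∈ arc (v k)} = #{v ∈ B | p ∈ arc (v k)} := by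
  have := hA.card_cover_inter_hyperplane k p
  rw [h, hB.card_cover_inter_hyperplane k p] at this
  exact (Nat.eq_of_mul_eq_mul_right (by positivity) this).symm

/-! ### Covering a box by a code -/

lemma cover_filter_subset (A : Finset (ι → ZMod 4)) (p : (ι → ZMod 4) → Prop) [DecidablePred p] :
    cover (A.filter p) ⊆ cover A :=
  cover_mono (filter_subset _ _)

lemma nonempty_of_mem_cover (h : x ∈ cover A) : A.Nonempty :=
  let ⟨v, hv, _⟩ := mem_cover.1 h; ⟨v, hv⟩

lemma nonempty_of_box_subset_cover (h : box u ⊆ cover A) : A.Nonempty :=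
  let ⟨_, hx⟩ := box_nonempty u; nonempty_of_mem_cover (h hx)

/-- Where `v i ≠ s i`, the arc of `v i` ends inside that of `s i`, so a word of `B` that agrees with
`v` inside `box s` has the letter `v i` at `i`. -/
lemma box_subset_cover_of_forall_mem_box (hvs : Meets v s)
    (h : ∀ x ∈ box s, x ∈ cover B ↔ x ∈ box v) : box v ⊆ cover B := by
  intro x hx
  choose y hy using fun i ↦ exists_mem_arc_and_mem_arc (hvs i)
  classical
  set z : ι → ZMod 4 := fun i ↦ if v i = s i then x i else y i with hz
  have hzv : z ∈ box v := mem_box.2 fun i ↦ by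
    simp only [hz]; split_ifs
    exacts [mem_box.1 hx i, (hy i).1]
  have hzs : z ∈ box s := mem_box.2 fun i ↦ by
    simp only [hz]; split_ifs with hi
    exacts [hi ▸ mem_box.1 hx i, (hy i).2]
  obtain ⟨w, hwB, hzw⟩ := mem_cover.1 ((h z hzs).2 hzv)
  refine mem_cover.2 ⟨w, hwB, mem_box.2 fun i ↦ ?_⟩
  by_cases hi : v i = s i
  · have := mem_box.1 hzw i
    simpa only [hz, if_pos hi] using this
  have hskew : Skew (s i) (v i) := ⟨hi, hvs i⟩
  suffices w i = v i from this ▸ mem_box.1 hx i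
  refine (hskew.eq_or_eq_of_mem (mem_box.1 hzs i) (mem_box.1 hzv i)
    (mem_box.1 hzw i)).resolve_left fun hws ↦ ?_
  obtain ⟨p, hps, hpv⟩ := hskew.add_two_right.exists_mem
  have hzp := (h (update z i p) (update_mem_box.2 ⟨hps, fun k _ ↦ mem_box.1 hzs k⟩)).1
    (mem_cover.2 ⟨w, hwB, update_mem_box.2 ⟨hws ▸ hps, fun k _ ↦ mem_box.1 hzw k⟩⟩)
  exact mem_arc_add_two_iff.1 hpv (update_mem_box.1 hzp).1

lemma box_update_subset_cover_filter (hu : box u ⊆ cover A) (hc : Skew (u j) c)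
    (hA : ∀ v ∈ A, Meets v u → v j = c ∨ v j = c + 2) :
    box (update u j c) ⊆ cover {v ∈ A | v j = c} := by
  intro x hx
  obtain ⟨hxj, hxu⟩ := mem_box_update.1 hx
  obtain ⟨p, hpu, hpc⟩ := hc.exists_mem
  have hpx : update x j p ∈ box u := update_mem_box.2 ⟨hpu, hxu⟩
  obtain ⟨v, hv, hpv⟩ := mem_cover.1 (hu hpx)
  obtain ⟨hpj, hxv⟩ := update_mem_box.1 hpv
  have hvj : v j = c := (hA v hv (meets_of_mem hpv hpx)).resolve_right fun h ↦
    mem_arc_add_two_iff.1 (h ▸ hpj) hpc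
  exact mem_cover.2 ⟨v, mem_filter.2 ⟨hv, hvj⟩, (mem_box_iff_forall_ne j).2 ⟨hvj ▸ hxj, hxv⟩⟩

lemma IsPacking.update_mem_cover_filter_add_two (hA : IsPacking A) (hu : box u ⊆ cover A)
    (hc : Skew (u j) c) (hxu : x ∈ box u) (hx : x ∈ cover {v ∈ A | v j = c}) (ha : a ∈ arc (u j))
    (hac : a ∈ arc (c + 2)) : update x j a ∈ cover {v ∈ A | v j = c + 2} := by
  have hax : update x j a ∈ box u := update_mem_box.2 ⟨ha, fun k _ ↦ mem_box.1 hxu k⟩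
  obtain ⟨v, hv, hav⟩ := mem_cover.1 (hu hax)
  obtain ⟨haj, hxv⟩ := update_mem_box.1 hav
  refine mem_cover.2 ⟨v, mem_filter.2 ⟨hv, ?_⟩, hav⟩
  refine (hc.add_two_right.eq_or_eq_of_mem ha hac haj).resolve_left fun hvu ↦ hc.1 ?_
  obtain ⟨w, hw, hxw⟩ := mem_cover.1 hx
  obtain ⟨hwA, hwc⟩ := mem_filter.1 hw
  have hxv : x ∈ box v := (mem_box_iff_forall_ne j).2 ⟨hvu ▸ mem_box.1 hxu j, hxv⟩
  rw [← hwc, ← hvu, hA w hwA v hv (meets_of_mem hxw hxv)]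

lemma update_mem_cover_filter_iff (hx : x j ∈ arc c) (ha : a ∈ arc c) :
    update x j a ∈ cover {v ∈ A | v j = c} ↔ x ∈ cover {v ∈ A | v j = c} := by
  simp only [mem_cover, mem_filter, update_mem_box, mem_box_iff_forall_ne (x := x) j]
  refine exists_congr fun v ↦ and_congr_right fun hv ↦ ?_
  simp only [hv.2, hx, ha]

lemma IsPacking.box_update_add_two_subset_cover_filter (hA : IsPacking A) (hu : box u ⊆ cover A)
    (hvu : Meets v u) (hne : v j ≠ u j) (hv : {w ∈ A | w j = v j} = {v}) :
    box (update v j (v j + 2)) ⊆ cover {w ∈ A | w j = v j + 2} := by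
  have hc : Skew (u j) (v j) := ⟨hne, hvu j⟩
  obtain ⟨a, hau, hav⟩ := hc.exists_mem
  obtain ⟨b, hbu, hbv⟩ := hc.add_two_right.exists_mem
  have hcover : ∀ y, y ∈ cover {w ∈ A | w j = v j} ↔ y ∈ box v := by simp [hv, mem_cover]
  refine box_subset_cover_of_forall_mem_box (s := update u j (v j + 2)) (fun k ↦ ?_)
    fun x hx ↦ ?_
  · obtain rfl | hk := eq_or_ne k j
    · simpa only [update_self] using Meets.refl (fun _ : ι ↦ v k + 2) k
    · simpa only [update_of_ne hk] using hvu k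
  obtain ⟨hxj, hxu⟩ := mem_box_update.1 hx
  have hau' : update x j a ∈ box u := update_mem_box.2 ⟨hau, hxu⟩
  have hbu' : update x j b ∈ box u := update_mem_box.2 ⟨hbu, hxu⟩
  rw [← update_mem_cover_filter_iff hxj hbv, mem_box_update]
  refine ⟨fun hb ↦ ⟨hxj, ?_⟩, fun h ↦ ?_⟩
  · have := hA.update_mem_cover_filter_add_two hu hc.add_two_right hbu' hb hau
      ((add_two_add_two (v j)).symm ▸ hav)
    rw [update_idem, add_two_add_two, hcover] at this
    exact (update_mem_box.1 this).2
  · have := hA.update_mem_cover_filter_add_two hu hc hau'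
      ((hcover _).2 (update_mem_box.2 ⟨hav, h.2⟩)) hbu hbv
    rwa [update_idem] at this

lemma box_subset_cover_filter_meets [DecidablePred fun v ↦ Meets v u] (hu : box u ⊆ cover A) :
    box u ⊆ cover {v ∈ A | Meets v u} := fun _ hx ↦
  let ⟨v, hv, hxv⟩ := mem_cover.1 (hu hx)
  mem_cover.2 ⟨v, mem_filter.2 ⟨hv, meets_of_mem hxv hx⟩, hxv⟩

lemma IsPacking.exists_eq_add_two (hA : IsPacking A) (hu : box u ⊆ cover A) (hv : v ∈ A)
    (hvu : Meets v u) (hj : v j ≠ u j) : ∃ w ∈ A, w j = v j + 2 := by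
  have hc : Skew (u j) (v j) := ⟨hj, hvu j⟩
  obtain ⟨b, hbu, hbv⟩ := hc.add_two_right.exists_mem
  obtain ⟨x, hxv, hxu⟩ := meets_iff.1 hvu
  obtain ⟨w, hw, -⟩ := mem_cover.1 <| hA.update_mem_cover_filter_add_two hu hc hxu
    (mem_cover.2 ⟨v, mem_filter.2 ⟨hv, rfl⟩, hxv⟩) hbu hbv
  exact ⟨w, mem_filter.1 hw⟩

lemma forall_eq_or_eq_of_two_le_card_fiber {α β : Type*} [DecidableEq β] {A : Finset α} {f : α → β}
    {c c' : β} (hne : c ≠ c') (hc : 2 ≤ #{w ∈ A | f w = c}) (hc' : 2 ≤ #{w ∈ A | f w = c'})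
    (hA : #A < 5) : ∀ w ∈ A, f w = c ∨ f w = c' := by
  have hdisj : Disjoint {w ∈ A | f w = c} {w ∈ A | f w = c'} :=
    disjoint_filter.2 fun w _ h h' ↦ hne (h.symm.trans h')
  refine filter_eq_self.1 (eq_of_subset_of_card_le (filter_subset _ _) ?_)
  classical
  rw [filter_or, card_union_of_disjoint hdisj]
  omega

section Minimal

variable (hA : IsCode A) (hmin : ∀ B ⊂ A, ∀ w, box w ⊆ cover B → w ∈ B)
include hA hmin

lemma IsCode.two_le_card_filter_of_minimal (hu : box u ⊆ cover A) (hv : v ∈ A) (hvu : Meets v u)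
    (hj : v j ≠ u j) : 2 ≤ #{w ∈ A | w j = v j} := by
  have hmem : v ∈ ({w ∈ A | w j = v j} : Finset _) := mem_filter.2 ⟨hv, rfl⟩
  by_contra! hlt
  have hsingle : {w ∈ A | w j = v j} = {v} := eq_singleton_iff_unique_mem.2
    ⟨hmem, fun _ hw ↦ card_le_one.1 (Nat.le_of_lt_succ hlt) _ hw _ hmem⟩
  have htwin := hmin _ (filter_ssubset.2 ⟨v, hv, (add_two_ne_self (v j)).symm⟩) _
    (hA.isPacking.box_update_add_two_subset_cover_filter hu hvu hj hsingle)
  exact hA.update_notMem hv (add_two_ne_self (v j)) (mem_filter.1 htwin).1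

lemma IsCode.five_le_card_of_minimal (huA : u ∉ A) (hu : box u ⊆ cover A)
    (hmeets : ∀ v ∈ A, Meets v u) : 5 ≤ #A := by
  by_contra! hcard
  obtain ⟨v, hv⟩ := nonempty_of_box_subset_cover hu
  obtain ⟨j, hj⟩ : ∃ j, v j ≠ u j := ne_iff.1 (ne_of_mem_of_not_mem hv huA)
  have hc : Skew (u j) (v j) := ⟨hj, hmeets v hv j⟩
  obtain ⟨v', hv', hvj'⟩ := hA.isPacking.exists_eq_add_two hu hv (hmeets v hv) hj
  have hne : v' j ≠ v j := hvj' ▸ add_two_ne_self _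
  have htwo := hA.two_le_card_filter_of_minimal hmin hu hv (hmeets v hv) hj
  have htwo' := hA.two_le_card_filter_of_minimal hmin hu hv' (hmeets v' hv')
    (hvj' ▸ hc.add_two_right.1)
  have hletters := forall_eq_or_eq_of_two_le_card_fiber hne.symm htwo htwo' hcard
  have hmem := hmin _ (filter_ssubset.2 ⟨v', hv', hne⟩) _
    (box_update_subset_cover_filter hu hc fun w hw _ ↦ hvj' ▸ hletters w hw)
  refine htwo.not_gt (Nat.lt_succ_of_le (card_le_one_iff_subset_singleton.2
    ⟨update u j (v j), fun w hw ↦ mem_singleton.2 ?_⟩))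
  obtain ⟨hwA, hwj⟩ := mem_filter.1 hw
  refine hA.isPacking w hwA _ (mem_filter.1 hmem).1 (hwj ▸ (hmeets w hwA).update_self)

end Minimal

lemma IsCode.five_le_card (hA : IsCode A) (huA : u ∉ A) (hu : box u ⊆ cover A) : 5 ≤ #A := by
  classical
  induction A using Finset.strongInduction generalizing u with
  | H A ih =>
  by_contra! hcard
  have hmin : ∀ B ⊂ A, ∀ w, box w ⊆ cover B → w ∈ B := fun B hB w hw ↦ by_contra fun hwB ↦
    hcard.not_ge ((ih B hB (hA.mono hB.subset) hwB hw).trans (card_le_card hB.subset))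
  refine hcard.not_ge (hA.five_le_card_of_minimal hmin huA hu fun v hv ↦ ?_)
  by_contra hvu
  refine huA (mem_filter.1 (hmin {w ∈ A | Meets w u} (filter_ssubset.2 ⟨v, hv, hvu⟩) u ?_)).1
  exact box_subset_cover_filter_meets hu

lemma IsCode.five_le_card_filter_meets [DecidablePred fun v ↦ Meets v u] (hA : IsCode A)
    (huA : u ∉ A) (hu : box u ⊆ cover A) : 5 ≤ #{v ∈ A | Meets v u} :=
  (hA.mono (filter_subset _ _)).five_le_card (fun h ↦ huA (mem_filter.1 h).1)
    (box_subset_cover_filter_meets hu)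

lemma IsCode.mem_of_box_subset_cover (hA : IsCode A) (hu : box u ⊆ cover A) (hcard : #A < 5) :
    u ∈ A :=
  by_contra fun huA ↦ hcard.not_ge (hA.five_le_card huA hu)

lemma IsCode.six_le_card (hA : IsCode A) (huA : u ∉ A) (hu : box u ⊆ cover A) (hvA : v ∉ A)
    (hv : box v ⊆ cover A) (huv : ¬ Meets u v) : 6 ≤ #A := by
  classical
  by_contra! hcard
  have hmeets : ∀ w ∉ A, box w ⊆ cover A → ∀ s ∈ A, Meets s w := fun w hwA hw ↦
    filter_eq_self.1 (eq_of_subset_of_card_le (filter_subset _ _)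
      ((Nat.le_of_lt_succ hcard).trans (hA.five_le_card_filter_meets hwA hw)))
  obtain ⟨j, hj⟩ := not_meets_iff.1 huv
  have hskew : ∀ s ∈ A, Skew (u j) (s j) := fun s hs ↦
    ⟨hj ▸ hmeets v hvA hv s hs j, hmeets u huA hu s hs j⟩
  obtain ⟨t, ht⟩ := nonempty_of_box_subset_cover hu
  have hletters : ∀ s ∈ A, s j = t j ∨ s j = t j + 2 := fun s hs ↦
    (hskew t ht).eq_or_eq_add_two (hskew s hs)
  have hhalf := box_update_subset_cover_filter hu (hskew t ht) fun s hs _ ↦ hletters s hs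
  have hhalf' := box_update_subset_cover_filter hu (hskew t ht).add_two_right fun s hs _ ↦ by
    rw [add_two_add_two]
    exact (hletters s hs).symm
  obtain ⟨t', ht'⟩ := nonempty_of_box_subset_cover hhalf'
  obtain ⟨htA', htj'⟩ := mem_filter.1 ht'
  have hmem : ∀ c, (∃ s ∈ A, s j ≠ c) → box (update u j c) ⊆ cover {s ∈ A | s j = c} →
      update u j c ∈ A := fun c hc hcov ↦
    (mem_filter.1 ((hA.mono (filter_subset _ _)).mem_of_box_subset_cover hcov
      ((card_lt_card (filter_ssubset.2 hc)).trans_le (Nat.le_of_lt_succ hcard)))).1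
  refine hA.update_notMem (hmem (t j) ⟨t', htA', htj' ▸ add_two_ne_self _⟩ hhalf)
    (i := j) (c := t j + 2) (by simpa using add_two_ne_self (t j)) ?_
  rw [update_idem]
  exact hmem _ ⟨t, ht, (add_two_ne_self _).symm⟩ hhalf'

/-! ### Two codes with the same cover on a box -/

lemma IsCode.two_le_card_filter_meets_or_five_le_card [DecidablePred fun v ↦ Meets v s]
    (hB : IsCode B) (hAB : Disjoint A B) (h : ∀ x ∈ box s, x ∈ cover A ↔ x ∈ cover B)
    (hx : x ∈ box s) (hxA : x ∈ cover A) : 2 ≤ #{v ∈ A | Meets v s} ∨ 5 ≤ #B := by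
  obtain ⟨v, hv, hxv⟩ := mem_cover.1 hxA
  by_contra! hlt
  have huniq : ∀ w ∈ A, Meets w s → w = v := fun w hw hws ↦
    card_le_one.1 (Nat.le_of_lt_succ hlt.1) _ (mem_filter.2 ⟨hw, hws⟩) _
      (mem_filter.2 ⟨hv, meets_of_mem hxv hx⟩)
  refine disjoint_left.1 hAB hv (hB.mem_of_box_subset_cover ?_ hlt.2)
  refine box_subset_cover_of_forall_mem_box (meets_of_mem hxv hx) fun y hy ↦ ?_
  rw [← h y hy, mem_cover]
  refine ⟨fun ⟨w, hw, hyw⟩ ↦ ?_, fun hyv ↦ ⟨v, hv, hyv⟩⟩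
  exact huniq w hw (meets_of_mem hyw hy) ▸ hyw

lemma IsCode.two_le_card_or_five_le_card (hB : IsCode B) (hAB : Disjoint A B)
    (h : ∀ x ∈ box s, x ∈ cover A ↔ x ∈ cover B) (hx : x ∈ box s) (hxA : x ∈ cover A) :
    2 ≤ #A ∨ 5 ≤ #B := by
  classical
  exact (hB.two_le_card_filter_meets_or_five_le_card hAB h hx hxA).imp_left
    fun h ↦ h.trans (card_filter_le _ _)

lemma IsCode.four_le_card_add_card (hA : IsCode A) (hB : IsCode B) (hAB : Disjoint A B)
    (h : ∀ x ∈ box s, x ∈ cover A ↔ x ∈ cover B) (hx : x ∈ box s) (hxA : x ∈ cover A) :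
    4 ≤ #A + #B := by
  have hA2 := hB.two_le_card_or_five_le_card hAB h hx hxA
  have hB2 := hA.two_le_card_or_five_le_card hAB.symm (fun y hy ↦ (h y hy).symm) hx
    ((h x hx).1 hxA)
  omega

lemma IsCode.two_le_card (hA : IsCode A) (hu : box u ⊆ cover A) (hv : box v ⊆ cover A)
    (huv : u ≠ v) : 2 ≤ #A := by
  by_contra! hcard
  have hmem : ∀ w, box w ⊆ cover A → w ∈ A := fun w hw ↦ hA.mem_of_box_subset_cover hw (by omega)
  exact huv (card_le_one.1 (Nat.le_of_lt_succ hcard) u (hmem u hu) v (hmem v hv))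

lemma IsCode.eight_le_card_add_card (hA : IsCode A) (hB : IsCode B) (hAB : Disjoint A B)
    (huA : box u ⊆ cover A) (huB : box u ⊆ cover B) (hvA : box v ⊆ cover A)
    (hvB : box v ⊆ cover B) (huv : ¬ Meets u v) : 8 ≤ #A + #B := by
  have hne : u ≠ v := fun h ↦ huv (h ▸ Meets.refl u)
  have hA2 := hA.two_le_card huA hvA hne
  have hB2 := hB.two_le_card huB hvB hne
  have hnot : ∀ w, w ∉ A ∨ w ∉ B := fun w ↦ or_iff_not_imp_left.2 fun h ↦
    disjoint_left.1 hAB (not_not.1 h)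
  obtain hu | hu := hnot u <;> obtain hv | hv := hnot v
  · have := hA.six_le_card hu huA hv hvA huv
    omega
  · have := hA.five_le_card hu huA
    have := hB.five_le_card hv hvB
    omega
  · have := hB.five_le_card hu huB
    have := hA.five_le_card hv hvA
    omega
  · have := hB.six_le_card hu huB hv hvB huv
    omega

lemma eq_or_eq_or_exists_skew_of_box_subset_union (hqv : ¬ Meets q v)
    (h : box u ⊆ box q ∪ box v) : u = q ∨ u = v ∨
      ∃ k, Skew (u k) (q k) ∧ v k = q k + 2 ∧ ∀ i ≠ k, q i = u i ∧ v i = u i := by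
  by_cases htwin : ∃ k, ∀ i ≠ k, q i = v i
  swap
  · have hcover : box u ⊆ cover {q, v} := by simpa [cover] using h
    have hcode : IsCode {q, v} := isCode_pair hqv (by simpa using htwin)
    have := hcode.mem_of_box_subset_cover hcover (card_le_two.trans_lt (by norm_num))
    exact (mem_insert.1 this).imp_right fun hv ↦ .inl (mem_singleton.1 hv)
  obtain ⟨k, hk⟩ := htwin
  have hvk : v k = q k + 2 := by
    obtain ⟨i, hi⟩ := not_meets_iff.1 hqv
    obtain rfl : i = k := by_contra fun hik ↦ add_two_ne_self (v i) (hi.symm.trans (hk i hik))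
    exact eq_add_two_comm.1 hi
  have huq : ∀ i ≠ k, q i = u i := fun i hi ↦ Eq.symm <| apply_eq_of_forall_mem_arc fun x hx ↦ by
    obtain hq | hv := mem_union.1 (h hx)
    exacts [mem_box.1 hq i, hk i hi ▸ mem_box.1 hv i]
  by_cases hqk : q k = u k
  · left
    funext i
    obtain rfl | hi := eq_or_ne i k
    exacts [hqk.symm, (huq i hi).symm]
  by_cases hvk' : v k = u k
  · refine .inr (.inl (funext fun i ↦ ?_))
    obtain rfl | hi := eq_or_ne i k
    exacts [hvk'.symm, ((hk i hi).symm.trans (huq i hi)).symm]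
  refine .inr (.inr ⟨k, ⟨hqk, fun hq ↦ hvk' ?_⟩, hvk, fun i hi ↦
    ⟨huq i hi, (hk i hi).symm.trans (huq i hi)⟩⟩)
  exact hvk.trans (eq_add_two_comm.1 hq).symm

lemma mem_cover_filter_iff_of_skew (hA : ∀ v ∈ A, Meets v s → Skew (s j) (v j))
    (hc : Skew (s j) c) (hx : x ∈ box s) :
    x ∈ cover {v ∈ A | v j = c} ↔ x ∈ cover A ∧ x j ∈ arc c := by
  simp only [mem_cover, mem_filter]
  constructor
  · rintro ⟨v, ⟨hv, rfl⟩, hxv⟩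
    exact ⟨⟨v, hv, hxv⟩, mem_box.1 hxv j⟩
  · rintro ⟨⟨v, hv, hxv⟩, hxc⟩
    refine ⟨v, ⟨hv, ?_⟩, hxv⟩
    refine (hc.eq_or_eq_add_two (hA v hv (meets_of_mem hxv hx))).resolve_right fun hvc ↦ ?_
    exact mem_arc_add_two_iff.1 (hvc ▸ mem_box.1 hxv j) hxc

lemma IsCode.four_le_card_filter_add_card_filter (hA : IsCode A) (hB : IsCode B)
    (hAB : Disjoint A B) (h : ∀ x ∈ box s, x ∈ cover A ↔ x ∈ cover B)
    (hskew : ∀ v ∈ A ∪ B, Meets v s → Skew (s j) (v j)) (ht : t ∈ A ∪ B) (hts : Meets t s) :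
    4 ≤ #{v ∈ A | v j = t j} + #{v ∈ B | v j = t j} := by
  have hc := hskew t ht hts
  have hfilterA : ∀ x ∈ box s, x ∈ cover {v ∈ A | v j = t j} ↔ x ∈ cover A ∧ x j ∈ arc (t j) :=
    fun x ↦ mem_cover_filter_iff_of_skew (fun v hv ↦ hskew v (mem_union_left _ hv)) hc
  have hfilterB : ∀ x ∈ box s, x ∈ cover {v ∈ B | v j = t j} ↔ x ∈ cover B ∧ x j ∈ arc (t j) :=
    fun x ↦ mem_cover_filter_iff_of_skew (fun v hv ↦ hskew v (mem_union_right _ hv)) hc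
  obtain ⟨x, hxt, hxs⟩ := meets_iff.1 hts
  have hxA : x ∈ cover A := by
    obtain ht | ht := mem_union.1 ht
    exacts [box_subset_cover ht hxt, (h x hxs).2 (box_subset_cover ht hxt)]
  exact (hA.mono (filter_subset _ _)).four_le_card_add_card (hB.mono (filter_subset _ _))
    (disjoint_filter_filter hAB)
    (fun y hy ↦ by rw [hfilterA y hy, hfilterB y hy, h y hy]) hxs
    ((hfilterA x hxs).2 ⟨hxA, mem_box.1 hxt j⟩)

lemma IsCode.apply_eq_apply_of_meets (hA : IsCode A) (hB : IsCode B)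
    (hAB : Disjoint A B) (h : ∀ x ∈ box s, x ∈ cover A ↔ x ∈ cover B)
    (hskew : ∀ v ∈ A ∪ B, Meets v s → Skew (s j) (v j)) (hcard : #A + #B < 8)
    (ht : t ∈ A ∪ B) (hts : Meets t s) (ht' : t' ∈ A ∪ B) (hts' : Meets t' s) : t j = t' j := by
  by_contra hne
  have hsum : ∀ C : Finset (ι → ZMod 4), #{v ∈ C | v j = t j} + #{v ∈ C | v j = t' j} ≤ #C :=
    fun C ↦ by
      rw [← card_union_of_disjoint (disjoint_filter.2 fun v _ hv hv' ↦ hne (hv.symm.trans hv'))]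
      exact card_le_card (union_subset (filter_subset _ _) (filter_subset _ _))
  have h4 := hA.four_le_card_filter_add_card_filter hB hAB h hskew ht hts
  have h4' := hA.four_le_card_filter_add_card_filter hB hAB h hskew ht' hts'
  have := hsum A
  have := hsum B
  omega

end Box

/-! ### Slices of two codes with the same cover -/

section Stack

variable {ι : Type*} {A B : ZMod 4 → Finset (ι → ZMod 4)} {l : ZMod 4}
  {q t u v w x y z : ι → ZMod 4} {j k : ι} {b p : ZMod 4}

/-- Models the four slices `{v ∈ V | v i = l}` of a code `V`, with the coordinate `i` forgotten. -/
structure IsStack (A : ZMod 4 → Finset (ι → ZMod 4)) : Prop where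
  isCode : ∀ l, IsCode (A l)
  not_meets : ∀ l, ∀ u ∈ A l, ∀ v ∈ A (l + 1), ¬ Meets u v
  disjoint : ∀ l, Disjoint (A l) (A (l + 2))

lemma IsStack.shift (hA : IsStack A) (m : ZMod 4) : IsStack fun l ↦ A (l + m) where
  isCode _ := hA.isCode _
  not_meets l := add_right_comm l 1 m ▸ hA.not_meets (l + m)
  disjoint l := add_right_comm l 2 m ▸ hA.disjoint (l + m)

lemma IsStack.neg (hA : IsStack A) : IsStack fun l ↦ A (-l) where
  isCode l := hA.isCode _
  not_meets l u hu v hv huv :=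
    hA.not_meets (-(l + 1)) v hv u (by rwa [show -(l + 1) + 1 = -l by ring]) huv.symm
  disjoint l := by
    have h := hA.disjoint (-(l + 2))
    rw [show -(l + 2) + 2 = -l by ring] at h
    exact h.symm

lemma IsStack.disjoint_succ (hA : IsStack A) (l : ZMod 4) : Disjoint (A l) (A (l + 1)) :=
  disjoint_left.2 fun u hu hu' ↦ hA.not_meets l u hu u hu' (Meets.refl u)

lemma IsStack.isPacking_union [Fintype ι] (hA : IsStack A) (l : ZMod 4) :
    IsPacking (A l ∪ A (l + 1)) := by
  intro u hu v hv huv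
  obtain hu | hu := mem_union.1 hu <;> obtain hv | hv := mem_union.1 hv
  · exact (hA.isCode l).isPacking u hu v hv huv
  · exact (hA.not_meets l u hu v hv huv).elim
  · exact (hA.not_meets l v hv u hu huv.symm).elim
  · exact (hA.isCode (l + 1)).isPacking u hu v hv huv

variable [Fintype ι] [DecidableEq ι]

lemma IsStack.disjoint_cover (hA : IsStack A) (l : ZMod 4) :
    Disjoint (cover (A l)) (cover (A (l + 1))) := by
  refine disjoint_left.2 fun x hx hx' ↦ ?_
  obtain ⟨u, hu, hxu⟩ := mem_cover.1 hx
  obtain ⟨v, hv, hxv⟩ := mem_cover.1 hx'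
  exact hA.not_meets l u hu v hv (meets_of_mem hxu hxv)

/-- Models the slices of two disjoint codes with the same cover: the points whose forgotten
coordinate is `l + 1` are covered by the slices `l` and `l + 1`. -/
structure AreRivals (A B : ZMod 4 → Finset (ι → ZMod 4)) : Prop where
  left : IsStack A
  right : IsStack B
  disjoint : ∀ l, Disjoint (A l) (B l)
  cover_eq : ∀ l, cover (A l) ∪ cover (A (l + 1)) = cover (B l) ∪ cover (B (l + 1))

namespace AreRivals

variable (h : AreRivals A B)
include h

lemma symm : AreRivals B A where
  left := h.right
  right := h.left
  disjoint l := (h.disjoint l).symm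
  cover_eq l := (h.cover_eq l).symm

lemma shift (m : ZMod 4) : AreRivals (fun l ↦ A (l + m)) fun l ↦ B (l + m) where
  left := h.left.shift m
  right := h.right.shift m
  disjoint l := h.disjoint _
  cover_eq l := by
    simp only [add_right_comm l 1 m]
    exact h.cover_eq _

lemma neg : AreRivals (fun l ↦ A (-l)) fun l ↦ B (-l) where
  left := h.left.neg
  right := h.right.neg
  disjoint l := h.disjoint _
  cover_eq l := by
    have := h.cover_eq (-(l + 1))
    rwa [show -(l + 1) + 1 = -l by ring, union_comm, union_comm (cover (B _))] at this

lemma cover_union_eq (l : ZMod 4) : cover (A l ∪ A (l + 1)) = cover (B l ∪ B (l + 1)) := by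
  rw [cover_union, cover_union, h.cover_eq]

lemma card_add (l : ZMod 4) : #(A l) + #(A (l + 1)) = #(B l) + #(B (l + 1)) := by
  rw [← card_union_of_disjoint (h.left.disjoint_succ l),
    ← card_union_of_disjoint (h.right.disjoint_succ l)]
  exact (h.left.isPacking_union l).card_eq_of_cover_eq (h.right.isPacking_union l)
    (h.cover_union_eq l)

lemma card_filter_mem_arc_add (l : ZMod 4) (k : ι) (p : ZMod 4) :
    #{v ∈ A l | p ∈ arc (v k)} + #{v ∈ A (l + 1) | p ∈ arc (v k)} =
      #{v ∈ B l | p ∈ arc (v k)} + #{v ∈ B (l + 1) | p ∈ arc (v k)} := by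
  rw [← card_union_of_disjoint (disjoint_filter_filter (h.left.disjoint_succ l)),
    ← card_union_of_disjoint (disjoint_filter_filter (h.right.disjoint_succ l)), ← filter_union,
    ← filter_union]
  exact (h.left.isPacking_union l).card_filter_mem_arc_eq_of_cover_eq (h.right.isPacking_union l)
    (h.cover_union_eq l) k p

lemma cover_sdiff_succ (l : ZMod 4) :
    cover (A l) \ cover (B l) = cover (B (l + 1)) \ cover (A (l + 1)) := by
  ext x
  have hcover : x ∈ cover (A l) ∨ x ∈ cover (A (l + 1)) ↔
      x ∈ cover (B l) ∨ x ∈ cover (B (l + 1)) := by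
    rw [← mem_union, ← mem_union, h.cover_eq]
  have hA : x ∈ cover (A l) → x ∉ cover (A (l + 1)) := fun hx ↦
    disjoint_left.1 (h.left.disjoint_cover l) hx
  have hB : x ∈ cover (B l) → x ∉ cover (B (l + 1)) := fun hx ↦
    disjoint_left.1 (h.right.disjoint_cover l) hx
  rw [mem_sdiff, mem_sdiff]
  tauto

lemma cover_sdiff_add_two (l : ZMod 4) :
    cover (A l) \ cover (B l) = cover (A (l + 2)) \ cover (B (l + 2)) := by
  rw [h.cover_sdiff_succ, h.symm.cover_sdiff_succ, add_assoc, one_add_one_eq_two]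

lemma mem_cover_iff_of_mem_box (ht : t ∈ B (l + 1)) (hx : x ∈ box t) :
    x ∈ cover (A l) ↔ x ∈ cover (A (l + 2)) := by
  have hxB : x ∈ cover (B (l + 1)) := box_subset_cover ht hx
  have hxl : x ∉ cover (B l) := fun hx' ↦ disjoint_left.1 (h.right.disjoint_cover l) hx' hxB
  have hxl' : x ∉ cover (B (l + 2)) := by
    rw [← one_add_one_eq_two, ← add_assoc]
    exact disjoint_left.1 (h.right.disjoint_cover (l + 1)) hxB
  have := congrArg (x ∈ ·) (h.cover_sdiff_add_two l)
  simpa [mem_sdiff, hxl, hxl'] using this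

lemma cover_eq_succ (hl : cover (A l) = cover (B l)) : cover (A (l + 1)) = cover (B (l + 1)) := by
  refine Subset.antisymm ?_ ?_
  · rw [← sdiff_eq_empty_iff_subset, ← h.symm.cover_sdiff_succ, hl, sdiff_self]; rfl
  · rw [← sdiff_eq_empty_iff_subset, ← h.cover_sdiff_succ, hl, sdiff_self]; rfl

lemma forall_cover_eq (hl : cover (A l) = cover (B l)) (m : ZMod 4) :
    cover (A m) = cover (B m) := by
  have h1 := h.cover_eq_succ hl
  have h2 := h.cover_eq_succ h1
  have h3 := h.cover_eq_succ h2
  obtain rfl | rfl | rfl | rfl : m = l ∨ m = l + 1 ∨ m = l + 1 + 1 ∨ m = l + 1 + 1 + 1 := by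
    clear * -
    revert l m; decide
  exacts [hl, h1, h2, h3]

lemma cover_subset_add_two (hsub : cover (A l) ⊆ cover (B l)) :
    cover (A (l + 2)) ⊆ cover (B (l + 2)) := by
  rw [← sdiff_eq_empty_iff_subset, ← h.cover_sdiff_add_two, sdiff_eq_empty_iff_subset.2 hsub]

lemma card_zero_add_card_two : #(A 0) + #(B 2) = #(A 2) + #(B 0) := by
  have h0 : #(A 0) + #(A 1) = #(B 0) + #(B 1) := h.card_add 0
  have h1 : #(A 1) + #(A 2) = #(B 1) + #(B 2) := h.card_add 1
  omega

/-- If `A 0 = ∅`, then `B 2` covers the words of `A 2` and `B 0`, which are as many as its own. -/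
lemma right_zero_eq_empty (hA : A 0 = ∅) (hB : #(B 2) ≤ 5) (hsub : cover (A 2) ⊆ cover (B 2)) :
    B 0 = ∅ := by
  have hdiff : cover (B 0) = cover (B 2) \ cover (A 2) := by
    have h02 := h.symm.cover_sdiff_add_two 0
    rw [hA] at h02
    simpa [cover] using h02
  have hmem : ∀ u ∈ A 2 ∪ B 0, u ∉ B 2 ∧ box u ⊆ cover (B 2) := by
    intro u hu
    obtain hu | hu := mem_union.1 hu
    · exact ⟨disjoint_left.1 (h.disjoint 2) hu, (box_subset_cover hu).trans hsub⟩
    · exact ⟨disjoint_left.1 (h.right.disjoint 0) hu,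
        (box_subset_cover hu).trans (hdiff ▸ sdiff_subset)⟩
  have hcross : ∀ u ∈ A 2, ∀ v ∈ B 0, ¬ Meets u v := fun u hu v hv huv ↦ by
    obtain ⟨x, hxu, hxv⟩ := meets_iff.1 huv
    exact (mem_sdiff.1 (hdiff ▸ box_subset_cover hv hxv)).2 (box_subset_cover hu hxu)
  have hdisj : Disjoint (A 2) (B 0) :=
    disjoint_left.2 fun u hu hu' ↦ hcross u hu u hu' (Meets.refl u)
  have hcard : #(A 2 ∪ B 0) = #(B 2) := by
    rw [card_union_of_disjoint hdisj, ← h.card_zero_add_card_two, hA, card_empty, zero_add]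
  by_contra hne
  obtain ⟨u, hu⟩ := nonempty_iff_ne_empty.2 hne
  obtain ⟨huB, hucov⟩ := hmem u (mem_union_right _ hu)
  have hfive := (h.right.isCode 2).five_le_card huB hucov
  obtain ⟨v, hv, hvu⟩ := exists_mem_ne (by omega : 1 < #(A 2 ∪ B 0)) u
  have huv : ¬ Meets u v := fun huv ↦ by
    obtain hv | hv := mem_union.1 hv
    · exact hcross v hv u hu huv.symm
    · exact hvu ((h.right.isCode 0).isPacking u hu v hv huv).symm
  obtain ⟨hvB, hvcov⟩ := hmem v hv
  have := (h.right.isCode 2).six_le_card huB hucov hvB hvcov huv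
  omega

lemma cover_eq_of_subset (hcard : #(A 0) + #(B 2) ≤ 5) (hsub : cover (A 0) ⊆ cover (B 0)) :
    cover (A 0) = cover (B 0) := by
  have hsub' : cover (A 2) ⊆ cover (B 2) := h.cover_subset_add_two hsub
  have heq := h.card_zero_add_card_two
  obtain hA | ⟨u, hu⟩ := (A 0).eq_empty_or_nonempty
  · rw [h.right_zero_eq_empty hA (by omega) hsub', hA]
  obtain hA' | ⟨v, hv⟩ := (A 2).eq_empty_or_nonempty
  · have hB' : B 2 = ∅ := (h.shift 2).right_zero_eq_empty hA' (by change #(B 0) ≤ 5; omega) hsub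
    exact h.forall_cover_eq (l := 2) (by rw [hA', hB']) 0
  have := (h.right.isCode 2).five_le_card (disjoint_left.1 (h.disjoint 2) hv)
    ((box_subset_cover hv).trans hsub')
  have := card_pos.2 ⟨u, hu⟩
  omega

lemma exists_mem_cover_sdiff (hcard : #(A 0) + #(B 2) ≤ 5) (hne : cover (A 0) ≠ cover (B 0)) :
    (cover (A 0) \ cover (B 0)).Nonempty :=
  sdiff_nonempty.2 fun hsub ↦ hne (h.cover_eq_of_subset hcard hsub)

/-- Both slices agree inside a word of `B (l + 1)` through `x`. -/
lemma two_le_card_or_five_le_card (hx : x ∈ cover (A l) \ cover (B l)) :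
    2 ≤ #(A l) ∨ 5 ≤ #(A (l + 2)) := by
  obtain ⟨t, ht, hxt⟩ := mem_cover.1 (mem_sdiff.1 (h.cover_sdiff_succ l ▸ hx)).1
  exact (h.left.isCode _).two_le_card_or_five_le_card (h.left.disjoint l)
    (fun y hy ↦ h.mem_cover_iff_of_mem_box ht hy) hxt (mem_sdiff.1 hx).1

lemma mem_cover_zero_iff (ht : t ∈ B 1 ∪ B 3) (hx : x ∈ box t) :
    x ∈ cover (A 0) ↔ x ∈ cover (A 2) := by
  obtain ht | ht := mem_union.1 ht
  · exact h.mem_cover_iff_of_mem_box (l := 0) ht hx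
  · exact (h.mem_cover_iff_of_mem_box (l := 2) ht hx).symm

lemma mem_cover_one_iff (ht : t ∈ A 0) (hx : x ∈ box t) :
    x ∈ cover (B 1) ↔ x ∈ cover (B 3) :=
  (h.symm.mem_cover_iff_of_mem_box (l := 3) ht hx).symm

lemma meets_of_meets (hA : #(A 0) = 2) (hA' : #(A 2) < 5) (ht : t ∈ B 1 ∪ B 3) (hv : v ∈ A 0)
    (hw : w ∈ A 0) (htv : Meets t v) : Meets t w := by
  classical
  obtain ⟨x, hxt, hxv⟩ := meets_iff.1 htv
  have htwo := ((h.left.isCode 2).two_le_card_filter_meets_or_five_le_card (h.left.disjoint 0)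
    (fun y hy ↦ h.mem_cover_zero_iff ht hy) hxt (box_subset_cover hv hxv)).resolve_right hA'.not_ge
  exact (filter_eq_self.1 (eq_of_subset_of_card_le (filter_subset _ _) (hA.trans_le htwo))
    w hw).symm

end AreRivals

/-! ### The critical configuration -/

/-- The configuration that remains to be excluded: `A 0 = {x, y}`, and the words of `B 1` and `B 3`
that meet `x` or `y` all have the same letter `b` at a coordinate `j` where `x` and `y` are
opposite. The bounds on the cardinalities are those that `∑ l, #(A l) ≤ 11` leaves in this case. -/
structure IsCritical (A B : ZMod 4 → Finset (ι → ZMod 4)) (x y : ι → ZMod 4) (j : ι)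
    (b : ZMod 4) : Prop extends AreRivals A B where
  left_zero_eq : A 0 = {x, y}
  apply_eq_add_two : y j = x j + 2
  skew : Skew (x j) b
  apply_eq_of_meets : ∀ t ∈ B 1 ∪ B 3, ∀ v ∈ A 0, Meets t v → t j = b
  exists_mem_cover : ∀ v ∈ A 0, ∃ z ∈ box v, z ∈ cover (B 1)
  card_left_odd : #(A 1) + #(A 3) ≤ 7
  card_right_zero : #(B 0) ≤ 3
  card_left_odd_of_eq : #(B 0) = 3 → #(A 1) ≤ 4 ∧ #(A 3) ≤ 4

lemma AreRivals.exists_isCritical_of_card (h : AreRivals A B)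
    (hne : (cover (A 0) \ cover (B 0)).Nonempty) (hA0 : #(A 0) = 2) (hA2 : #(A 2) < 5)
    (hB : #(B 1) + #(B 3) ≤ 7)
    (hcard : #(A 1) + #(A 3) ≤ 7) (hB0 : #(B 0) ≤ 3)
    (hcard' : #(B 0) = 3 → #(A 1) ≤ 4 ∧ #(A 3) ≤ 4) :
    ∃ x y j b, IsCritical A B x y j b := by
  obtain ⟨x, y, hxy, hA⟩ := card_eq_two.1 hA0
  have hxA : x ∈ A 0 := by simp [hA]
  have hyA : y ∈ A 0 := by simp [hA]
  obtain ⟨j, hj⟩ := not_meets_iff.1 fun hyx ↦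
    hxy.symm ((h.left.isCode 0).isPacking y hyA x hxA hyx)
  have hskew : ∀ t ∈ B 1 ∪ B 3, Meets t x → Skew (x j) (t j) := fun t ht htx ↦ by
    refine ⟨fun htj ↦ h.meets_of_meets hA0 hA2 ht hxA hyA htx j ?_, htx j⟩
    rw [htj, hj, add_two_add_two]
  obtain ⟨z, hz⟩ := hne
  obtain ⟨v₀, hv₀, hzv₀⟩ := mem_cover.1 (mem_sdiff.1 hz).1
  obtain ⟨t₀, ht₀, hzt₀⟩ := mem_cover.1 (mem_sdiff.1 (h.cover_sdiff_succ 0 ▸ hz)).1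
  have ht₀' : t₀ ∈ B 1 ∪ B 3 := mem_union_left _ ht₀
  have hmeets : ∀ v ∈ A 0, Meets t₀ v := fun v hv ↦
    h.meets_of_meets hA0 hA2 ht₀' hv₀ hv (meets_of_mem hzt₀ hzv₀)
  refine ⟨x, y, j, t₀ j, h, hA, hj, hskew t₀ ht₀' (hmeets x hxA), fun t ht v hv htv ↦ ?_,
    fun v hv ↦ ?_, hcard, hB0, hcard'⟩
  · exact (h.right.isCode 1).apply_eq_apply_of_meets (h.right.isCode 3) (h.right.disjoint 1)
      (fun y hy ↦ h.mem_cover_one_iff hxA hy) hskew (by omega) ht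
      (h.meets_of_meets hA0 hA2 ht hv hxA htv) ht₀' (hmeets x hxA)
  · obtain ⟨y, hyt, hyv⟩ := meets_iff.1 (hmeets v hv)
    exact ⟨y, hyv, box_subset_cover ht₀ hyt⟩

namespace IsCritical

variable (h : IsCritical A B x y j b)
include h

lemma left_mem : x ∈ A 0 := h.left_zero_eq ▸ mem_insert_self x {y}

lemma symm : IsCritical A B y x j b where
  __ := h
  left_zero_eq := h.left_zero_eq.trans (pair_comm x y)
  apply_eq_add_two := eq_add_two_comm.1 h.apply_eq_add_two
  skew := h.apply_eq_add_two ▸ h.skew.add_two_left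

lemma neg : IsCritical (fun l ↦ A (-l)) (fun l ↦ B (-l)) x y j b where
  __ := h.toAreRivals.neg
  left_zero_eq := h.left_zero_eq
  apply_eq_add_two := h.apply_eq_add_two
  skew := h.skew
  apply_eq_of_meets t ht := h.apply_eq_of_meets t (union_comm (B 3) (B 1) ▸ ht)
  exists_mem_cover v hv :=
    let ⟨z, hzv, hz⟩ := h.exists_mem_cover v hv
    ⟨z, hzv, (h.mem_cover_one_iff hv hzv).1 hz⟩
  card_left_odd := (add_comm _ _).trans_le h.card_left_odd
  card_right_zero := h.card_right_zero
  card_left_odd_of_eq hB := (h.card_left_odd_of_eq hB).symm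

lemma ne : x ≠ y := fun hxy ↦ by
  have := h.apply_eq_add_two
  rw [hxy] at this
  exact add_two_ne_self _ this.symm

lemma card_left_zero : #(A 0) = 2 := by rw [h.left_zero_eq, card_pair h.ne]

lemma notMem_cover_left_zero (hx : z ∉ box x) (hy : z ∉ box y) : z ∉ cover (A 0) := by
  simp [h.left_zero_eq, mem_cover, hx, hy]

lemma mem_cover_left_one (hA : z ∉ cover (A 0)) (hB : z ∈ cover (B 0) ∪ cover (B 1)) :
    z ∈ cover (A 1) := by
  have hcover : cover (A 0) ∪ cover (A 1) = cover (B 0) ∪ cover (B 1) := h.cover_eq 0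
  exact (mem_union.1 (hcover ▸ hB)).resolve_left hA

lemma mem_cover_right_or (hz : z ∈ box x) :
    z ∈ cover (B 0) ∨ ∃ t ∈ B 1, t j = b ∧ z ∈ box t := by
  have hcover : cover (A 0) ∪ cover (A 1) = cover (B 0) ∪ cover (B 1) := h.cover_eq 0
  refine (mem_union.1 (hcover ▸ mem_union_left _ (box_subset_cover h.left_mem hz))).imp_right
    fun hz' ↦ ?_
  obtain ⟨t, ht, hzt⟩ := mem_cover.1 hz'
  exact ⟨t, ht, h.apply_eq_of_meets t (mem_union_left _ ht) x h.left_mem (meets_of_mem hzt hz), hzt⟩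

lemma exists_right_zero_of_forall_ne_mem_arc (hz : ∀ i ≠ j, z i ∈ arc (x i)) :
    ∃ w ∈ B 0, (w j = x j ∨ w j = b + 2) ∧ ∀ i ≠ j, z i ∈ arc (w i) := by
  obtain ⟨p, hpx, hpb⟩ := h.skew.add_two_right.exists_mem
  obtain hB | ⟨t, -, htj, hzt⟩ := h.mem_cover_right_or (update_mem_box.2 ⟨hpx, hz⟩)
  · obtain ⟨w, hw, hzw⟩ := mem_cover.1 hB
    obtain ⟨hpw, hzw⟩ := update_mem_box.1 hzw
    exact ⟨w, hw, h.skew.add_two_right.eq_or_eq_of_mem hpx hpb hpw, hzw⟩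
  · exact (mem_arc_add_two_iff.1 hpb (htj ▸ (update_mem_box.1 hzt).1)).elim

lemma mem_cover_right_of_forall_ne_mem_arc (hno : ∀ w ∈ B 0, w j ≠ x j)
    (hz : ∀ i ≠ j, z i ∈ arc (x i)) (hzb : z j ∈ arc b) :
    z ∈ cover {w ∈ B 0 | w j = b} ∨ z ∈ cover (B 1) := by
  obtain ⟨p, hpx, hpb⟩ := h.skew.exists_mem
  obtain hB | ⟨t, ht, htj, hzt⟩ := h.mem_cover_right_or (update_mem_box.2 ⟨hpx, hz⟩)
  · obtain ⟨w, hw, hzw⟩ := mem_cover.1 hB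
    obtain ⟨hpw, hzw⟩ := update_mem_box.1 hzw
    have hwj := (h.skew.eq_or_eq_of_mem hpx hpb hpw).resolve_left (hno w hw)
    exact .inl (mem_cover.2
      ⟨w, mem_filter.2 ⟨hw, hwj⟩, (mem_box_iff_forall_ne j).2 ⟨hwj ▸ hzb, hzw⟩⟩)
  · exact .inr (mem_cover.2
      ⟨t, ht, (mem_box_iff_forall_ne j).2 ⟨htj ▸ hzb, (update_mem_box.1 hzt).2⟩⟩)

lemma update_mem_right_zero (hno : ∀ w ∈ B 0, w j ≠ x j) : update x j (b + 2) ∈ B 0 := by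
  refine (h.right.isCode 0).mem_of_box_subset_cover (fun z hz ↦ ?_)
    (h.card_right_zero.trans_lt (by norm_num))
  obtain ⟨hzj, hzx⟩ := mem_box_update.1 hz
  obtain ⟨w, hw, hwj, hzw⟩ := h.exists_right_zero_of_forall_ne_mem_arc hzx
  refine mem_cover.2 ⟨w, hw, (mem_box_iff_forall_ne j).2 ⟨?_, hzw⟩⟩
  rwa [hwj.resolve_left (hno w hw)]

section NoLetter

lemma box_update_subset_cover_left_one (hno : ∀ w ∈ B 0, w j ≠ x j) (hkj : k ≠ j)
    (hk : y k = x k + 2) : box (update x j (x j + 2)) ⊆ cover (A 1) := by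
  intro z hz
  obtain ⟨hzj, hzx⟩ := mem_box_update.1 hz
  refine h.mem_cover_left_one (h.notMem_cover_left_zero
    (fun hzx' ↦ mem_arc_add_two_iff.1 hzj (mem_box.1 hzx' j))
    (fun hzy ↦ mem_arc_add_two_iff.1 (hk ▸ mem_box.1 hzy k) (hzx k hkj))) ?_
  by_cases hzb : z j ∈ arc b
  · exact mem_union.2 ((h.mem_cover_right_of_forall_ne_mem_arc hno hzx hzb).imp_left
      fun hz ↦ cover_filter_subset _ _ hz)
  · refine mem_union_left _ (box_subset_cover (h.update_mem_right_zero hno) ?_)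
    exact mem_box_update.2 ⟨mem_arc_add_two_iff.2 hzb, hzx⟩

lemma exists_apply_eq (hx : ∀ w ∈ B 0, w j ≠ x j) : ∃ w ∈ B 0, w j = y j := by
  by_contra! hy
  have hne : update x j (b + 2) ≠ update y j (b + 2) := fun hxy ↦ by
    refine h.ne ((h.left.isCode 0).eq_of_forall_ne x h.left_mem y h.symm.left_mem j fun k hk ↦ ?_)
    simpa [hk] using congrFun hxy k
  obtain ⟨k, hk⟩ := not_meets_iff.1 fun hmeets ↦ hne ((h.right.isCode 0).isPacking _
    (h.update_mem_right_zero hx) _ (h.symm.update_mem_right_zero hy) hmeets)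
  obtain rfl | hkj := eq_or_ne k j
  · exact add_two_ne_self (b + 2) (by simpa using hk.symm)
  rw [update_of_ne hkj, update_of_ne hkj] at hk
  have hk' := eq_add_two_comm.1 hk
  have hcard := (h.left.isCode 1).eight_le_card_add_card (h.left.isCode 3) (h.left.disjoint 1)
    (h.box_update_subset_cover_left_one hx hkj hk')
    (h.neg.box_update_subset_cover_left_one hx hkj hk')
    (h.symm.box_update_subset_cover_left_one hy hkj hk)
    (h.symm.neg.box_update_subset_cover_left_one hy hkj hk)
    (not_meets_iff.2 ⟨k, by simpa only [update_of_ne hkj] using hk⟩)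
  have := h.card_left_odd
  omega

end NoLetter

lemma false_of_box_subset_cover_left (hB : #(B 0) = 3) (h1 : box w ⊆ cover (A 1))
    (h3 : box w ⊆ cover (A 3)) : False := by
  obtain ⟨hA1, hA3⟩ := h.card_left_odd_of_eq hB
  exact disjoint_left.1 (h.left.disjoint 1)
    ((h.left.isCode 1).mem_of_box_subset_cover h1 (by omega))
    ((h.left.isCode 3).mem_of_box_subset_cover h3 (by omega))

lemma false_of_box_subset_cover_right (hB : #(B 0) = 3) (h1 : box w ⊆ cover (B 1))
    (h3 : box w ⊆ cover (B 3)) : False := by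
  obtain ⟨hA1, hA3⟩ := h.card_left_odd_of_eq hB
  have hA0 := h.card_left_zero
  have hcard0 : #(A 0) + #(A 1) = #(B 0) + #(B 1) := h.card_add 0
  have hcard3 : #(A 3) + #(A 0) = #(B 3) + #(B 0) := h.card_add 3
  exact disjoint_left.1 (h.right.disjoint 1)
    ((h.right.isCode 1).mem_of_box_subset_cover h1 (by omega))
    ((h.right.isCode 3).mem_of_box_subset_cover h3 (by omega))

section BothLetters

lemma exists_right_zero_of_mem_cover_right_one (hz : z ∈ box x) (hzB : z ∈ cover (B 1)) :
    z j ∈ arc b ∧ ∃ w ∈ B 0, w j = b + 2 ∧ ∀ i ≠ j, z i ∈ arc (w i) := by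
  have hzB0 : z ∉ cover (B 0) := fun hz0 ↦ disjoint_left.1 (h.right.disjoint_cover 0) hz0 hzB
  obtain ⟨t, -, htj, hzt⟩ := (h.mem_cover_right_or hz).resolve_left hzB0
  obtain ⟨hzj, hzx⟩ := (mem_box_iff_forall_ne j).1 hz
  obtain ⟨w, hw, hwj, hzw⟩ := h.exists_right_zero_of_forall_ne_mem_arc hzx
  refine ⟨htj ▸ mem_box.1 hzt j, w, hw, hwj.resolve_left fun hwx ↦ hzB0 ?_, hzw⟩
  exact mem_cover.2 ⟨w, hw, (mem_box_iff_forall_ne j).2 ⟨hwx ▸ hzj, hzw⟩⟩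

lemma mem_cover_right_one_iff (hB : B 0 = {v, u, q}) (hv : v j = x j) (hu : u j = y j)
    (hq : q j = b + 2) (hz : z ∈ box x) : z ∈ cover (B 1) ↔ z ∈ box (update q j b) := by
  have hzj := mem_box.1 hz j
  rw [mem_box_update]
  constructor
  · intro hzB
    obtain ⟨hzb, w, hw, hwj, hzw⟩ := h.exists_right_zero_of_mem_cover_right_one hz hzB
    have hwB : w = v ∨ w = u ∨ w = q := by simpa [hB] using hw
    obtain rfl | rfl | rfl := hwB
    · exact (h.skew.add_two_right.1 (hwj.symm.trans hv)).elim
    · exact (h.symm.skew.add_two_right.1 (hwj.symm.trans hu)).elim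
    · exact ⟨hzb, hzw⟩
  · rintro ⟨hzb, hzq⟩
    obtain hz0 | ⟨t, ht, -, hzt⟩ := h.mem_cover_right_or hz
    · obtain ⟨w, hw, hzw⟩ := mem_cover.1 hz0
      have hwB : w = v ∨ w = u ∨ w = q := by simpa [hB] using hw
      obtain rfl | rfl | rfl := hwB
      · obtain ⟨p, hpx, hpb⟩ := h.skew.add_two_right.exists_mem
        have hwq : w = q := (h.right.isCode 0).isPacking w hw q (by simp [hB])
          (meets_of_mem (x := update z j p)
            (update_mem_box.2 ⟨hv ▸ hpx, fun i _ ↦ mem_box.1 hzw i⟩)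
            (update_mem_box.2 ⟨hq ▸ hpb, hzq⟩))
        exact (h.skew.add_two_right.1 (by rw [← hq, ← hwq, hv])).elim
      · have hzy := mem_box.1 hzw j
        rw [hu, h.apply_eq_add_two, mem_arc_add_two_iff] at hzy
        exact (hzy hzj).elim
      · exact (mem_arc_add_two_iff.1 (hq ▸ mem_box.1 hzw j) hzb).elim
    · exact box_subset_cover ht hzt

lemma box_update_subset_cover_right_one (hB : B 0 = {v, u, q}) (hv : v j = x j) (hu : u j = y j)
    (hq : q j = b + 2) : box (update q j b) ⊆ cover (B 1) := by
  obtain ⟨z, hzx, hzB⟩ := h.exists_mem_cover x h.left_mem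
  refine box_subset_cover_of_forall_mem_box (s := x) (meets_of_mem (x := z) ?_ hzx)
    fun z' hz' ↦ h.mem_cover_right_one_iff hB hv hu hq hz'
  exact (h.mem_cover_right_one_iff hB hv hu hq hzx).1 hzB

lemma false_of_apply_eq_of_apply_eq (hv : v ∈ B 0) (hvj : v j = x j) (hu : u ∈ B 0)
    (huj : u j = y j) : False := by
  obtain ⟨z, hzx, hzB⟩ := h.exists_mem_cover x h.left_mem
  obtain ⟨-, q, hq, hqj, -⟩ := h.exists_right_zero_of_mem_cover_right_one hzx hzB
  have hvu : v ≠ u := fun hvu ↦ by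
    have := h.apply_eq_add_two
    rw [← huj, ← hvu, hvj] at this
    exact add_two_ne_self _ this.symm
  have hvq : v ≠ q := fun hvq ↦ h.skew.add_two_right.1 (by rw [← hqj, ← hvq, hvj])
  have huq : u ≠ q := fun huq ↦ h.symm.skew.add_two_right.1 (by rw [← hqj, ← huq, huj])
  have hcard : #{v, u, q} = 3 := card_eq_three.2 ⟨v, u, q, hvu, hvq, huq, rfl⟩
  have hB : {v, u, q} = B 0 :=
    eq_of_subset_of_card_le (by simp [insert_subset_iff, hv, hu, hq])
      (h.card_right_zero.trans hcard.ge)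
  exact h.false_of_box_subset_cover_right (hB ▸ hcard)
    (h.box_update_subset_cover_right_one hB.symm hvj huj hqj)
    (h.neg.box_update_subset_cover_right_one hB.symm hvj huj hqj)

end BothLetters

section OneLetter

lemma box_update_subset_cover_right_one_of_forall_ne (hx : ∀ w ∈ B 0, w j ≠ x j)
    (hb : ∀ w ∈ B 0, w j ≠ b) : box (update x j b) ⊆ cover (B 1) := fun z hz ↦ by
  obtain ⟨hzj, hzx⟩ := mem_box_update.1 hz
  refine (h.mem_cover_right_of_forall_ne_mem_arc hx hzx hzj).resolve_left fun hzB ↦ ?_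
  obtain ⟨w, hw, -⟩ := mem_cover.1 hzB
  exact hb w (mem_filter.1 hw).1 (mem_filter.1 hw).2

lemma box_update_subset_box_union_box
    (hB : ∀ w ∈ B 0, w j = b ∨ w = v ∨ w = update x j (b + 2)) :
    box (update y j (b + 2)) ⊆ box (update x j (b + 2)) ∪ box (update v j (b + 2)) := by
  intro z hz
  obtain ⟨hzj, hzy⟩ := mem_box_update.1 hz
  obtain ⟨w, hw, hwj, hzw⟩ := h.symm.exists_right_zero_of_forall_ne_mem_arc hzy
  obtain hwb | rfl | rfl := hB w hw
  · obtain hwj | hwj := hwj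
    · exact (h.symm.skew.1 (hwb.symm.trans hwj)).elim
    · exact (add_two_ne_self b (hwj.symm.trans hwb)).elim
  · exact mem_union_right _ (mem_box_update.2 ⟨hzj, hzw⟩)
  · refine mem_union_left _ ((mem_box_iff_forall_ne j).2 ⟨?_, hzw⟩)
    rwa [update_self]

lemma exists_eq_update (hx : ∀ w ∈ B 0, w j ≠ x j) (hv : v ∈ B 0) (hvj : v j = y j)
    (hB : ∀ w ∈ B 0, w j = b ∨ w = v ∨ w = update x j (b + 2)) :
    ∃ k ≠ j, Skew (y k) (x k) ∧ v = update y k (x k + 2) ∧ ∀ i ≠ j, i ≠ k → x i = y i := by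
  have hskew : y j ≠ b + 2 := h.symm.skew.add_two_right.1.symm
  have hmeets : ¬ Meets (update x j (b + 2)) (update v j (b + 2)) := fun hmeets ↦ by
    have hXv := (h.right.isCode 0).isPacking _ (h.update_mem_right_zero hx) v hv fun i ↦ by
      obtain rfl | hi := eq_or_ne i j
      · rw [update_self, hvj]
        exact fun hb ↦ h.symm.skew.1 (add_right_cancel hb)
      · simpa only [update_of_ne hi] using hmeets i
    exact hskew (by rw [← hvj, ← hXv, update_self])
  obtain hyx | hyv | ⟨k, hk, hvk, hxy⟩ := eq_or_eq_or_exists_skew_of_box_subset_union hmeets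
    (h.box_update_subset_box_union_box hB)
  · refine (h.ne ((h.left.isCode 0).eq_of_forall_ne x h.left_mem y h.symm.left_mem j
      fun i hi ↦ ?_)).elim
    simpa [hi] using (congrFun hyx i).symm
  · have hyv : y = v := funext fun i ↦ by
      obtain rfl | hi := eq_or_ne i j
      exacts [hvj.symm, by simpa [hi] using congrFun hyv i]
    exact (disjoint_left.1 (h.disjoint 0) h.symm.left_mem (hyv ▸ hv)).elim
  · have hkj : k ≠ j := by
      rintro rfl
      exact hk.1 (by simp)
    simp only [update_of_ne hkj] at hk hvk
    refine ⟨k, hkj, hk, eq_update_iff.2 ⟨hvk, fun i hi ↦ ?_⟩, fun i hij hik ↦ ?_⟩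
    · obtain rfl | hij := eq_or_ne i j
      exacts [hvj, by simpa [hij] using (hxy i hi).2]
    · simpa [hij] using (hxy i hik).1

lemma box_update_add_two_subset_cover_left_one (hx : ∀ w ∈ B 0, w j ≠ x j) (hkj : k ≠ j)
    (hxy : ∀ i ≠ j, i ≠ k → x i = y i) (hv : update y k (x k + 2) ∈ B 0) :
    box (update y k (y k + 2)) ⊆ cover (A 1) := by
  intro z hz
  obtain ⟨hzk, hzy⟩ := mem_box_update.1 hz
  refine h.mem_cover_left_one (h.notMem_cover_left_zero (fun hzx ↦ ?_)
    fun hzy' ↦ mem_arc_add_two_iff.1 hzk (mem_box.1 hzy' k)) ?_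
  · exact mem_arc_add_two_iff.1 (h.apply_eq_add_two ▸ hzy j hkj.symm) (mem_box.1 hzx j)
  by_cases hzxk : z k ∈ arc (x k)
  swap
  · exact mem_union_left _ (box_subset_cover hv (mem_box_update.2
      ⟨mem_arc_add_two_iff.2 hzxk, hzy⟩))
  have hzx : ∀ i ≠ j, z i ∈ arc (x i) := fun i hi ↦ by
    obtain rfl | hik := eq_or_ne i k
    exacts [hzxk, hxy i hi hik ▸ hzy i hik]
  by_cases hzb : z j ∈ arc b
  · exact mem_union.2 ((h.mem_cover_right_of_forall_ne_mem_arc hx hzx hzb).imp_left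
      fun hz ↦ cover_filter_subset _ _ hz)
  · exact mem_union_left _ (box_subset_cover (h.update_mem_right_zero hx)
      (mem_box_update.2 ⟨mem_arc_add_two_iff.2 hzb, hzx⟩))

lemma notMem_arc_of_meets (hx : ∀ w ∈ B 0, w j ≠ x j) (hkj : k ≠ j)
    (hxy : ∀ i ≠ j, i ≠ k → x i = y i) (hv : update y k (x k + 2) ∈ B 0)
    (hp : p ∈ arc (x k + 2)) (ht : t ∈ B 3) (htx : Meets t (update x j b)) : p ∉ arc (t k) := by
  intro hpt
  have htx' : ∀ i ≠ j, t i ≠ x i + 2 := fun i hi ↦ by simpa only [update_of_ne hi] using htx i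
  have htj : t j = b := by
    obtain ⟨i, hi⟩ := not_meets_iff.1 fun hXt ↦
      h.right.not_meets 3 t ht _ (h.update_mem_right_zero hx) hXt
    obtain rfl | hij := eq_or_ne i j
    · rw [hi, update_self, add_two_add_two]
    · exact (htx' i hij (by rwa [update_of_ne hij] at hi)).elim
  obtain ⟨i, hi⟩ := not_meets_iff.1 (h.right.not_meets 3 t ht _ hv)
  obtain rfl | hik := eq_or_ne i k
  · rw [update_self, add_two_add_two] at hi
    exact mem_arc_add_two_iff.1 hp (hi ▸ hpt)
  rw [update_of_ne hik] at hi
  obtain rfl | hij := eq_or_ne i j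
  · exact h.symm.skew.2 (htj.symm.trans hi)
  · exact htx' i hij (hxy i hij hik ▸ hi)

lemma apply_eq_add_two_of_meets (ht : t ∈ A 3) (hty : Meets t (update y k (y k + 2))) :
    t k = y k + 2 := by
  obtain ⟨i, hi⟩ := not_meets_iff.1 (h.left.not_meets 3 t ht y h.symm.left_mem)
  obtain rfl | hik := eq_or_ne i k
  · exact hi
  · exact (hty i (by rwa [update_of_ne hik])).elim

/-- Otherwise at least five words of `A 3`, but at most one word each of `B 3` and `B 0`, have an
arc through a common point `p` at the coordinate `k`. -/
lemma update_mem_right_three (hx : ∀ w ∈ B 0, w j ≠ x j) (hb : ∀ w ∈ B 0, w j ≠ b) (hkj : k ≠ j)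
    (hk : Skew (y k) (x k)) (hxy : ∀ i ≠ j, i ≠ k → x i = y i)
    (hv : update y k (x k + 2) ∈ B 0) (hB : #(B 0) = 2) : update x j b ∈ B 3 := by
  classical
  by_contra hxB
  have hB3 := (h.right.isCode 3).five_le_card_filter_meets hxB
    (h.neg.box_update_subset_cover_right_one_of_forall_ne hx hb)
  have hB1 := card_pos.2 <| nonempty_of_box_subset_cover
    (h.box_update_subset_cover_right_one_of_forall_ne hx hb)
  have hA0 := h.card_left_zero
  have hA1 : #(A 0) + #(A 1) = #(B 0) + #(B 1) := h.card_add 0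
  have hA3 : #(A 3) + #(A 0) = #(B 3) + #(B 0) := h.card_add 3
  have hcard := h.card_left_odd
  have hB3le := card_filter_le (B 3) fun t ↦ Meets t (update x j b)
  have hyA : update y k (y k + 2) ∈ A 1 := (h.left.isCode 1).mem_of_box_subset_cover
    (h.box_update_add_two_subset_cover_left_one hx hkj hxy hv) (by omega)
  have hfive := (h.left.isCode 3).five_le_card_filter_meets
    (disjoint_left.1 (h.left.disjoint 1) hyA)
    (h.neg.box_update_add_two_subset_cover_left_one hx hkj hxy hv)
  obtain ⟨p, hpy, hpx⟩ := hk.add_two_left.add_two_right.exists_mem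
  have hA3p : 5 ≤ #{t ∈ A 3 | p ∈ arc (t k)} := hfive.trans <| card_le_card fun t ht ↦ by
    rw [mem_filter] at ht ⊢
    exact ⟨ht.1, h.apply_eq_add_two_of_meets ht.1 ht.2 ▸ hpy⟩
  have hB3p : #{t ∈ B 3 | p ∈ arc (t k)} ≤ #{t ∈ B 3 | ¬ Meets t (update x j b)} :=
    card_le_card <| monotone_filter_right _ fun t ht hpt htx ↦
      h.notMem_arc_of_meets hx hkj hxy hv hpx ht htx hpt
  have hB0p : #{t ∈ B 0 | p ∈ arc (t k)} < #(B 0) := card_lt_card <| filter_ssubset.2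
    ⟨_, h.update_mem_right_zero hx, by rwa [update_of_ne hkj, ← mem_arc_add_two_iff]⟩
  have hcount : #{t ∈ A 3 | p ∈ arc (t k)} + #{t ∈ A 0 | p ∈ arc (t k)} =
      #{t ∈ B 3 | p ∈ arc (t k)} + #{t ∈ B 0 | p ∈ arc (t k)} := h.card_filter_mem_arc_add 3 k p
  have hsplit := card_filter_add_card_filter_not (s := B 3) fun t ↦ Meets t (update x j b)
  omega

lemma false_of_exists_apply_eq (hx : ∀ w ∈ B 0, w j ≠ x j) (hu : u ∈ B 0) (huj : u j = b) :
    False := by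
  obtain ⟨v, hv, hvj⟩ := h.exists_apply_eq hx
  have hX := h.update_mem_right_zero hx
  have hvX : v ≠ update x j (b + 2) := fun hvX ↦
    h.symm.skew.add_two_right.1 (by rw [← hvj, hvX, update_self])
  have hvu : v ≠ u := fun hvu ↦ h.symm.skew.1 (by rw [← huj, ← hvu, hvj])
  have hXu : update x j (b + 2) ≠ u := fun hXu ↦
    add_two_ne_self b (by rw [← update_self j (b + 2) x, hXu, huj])
  have hcard : #{v, update x j (b + 2), u} = 3 := card_eq_three.2 ⟨_, _, _, hvX, hvu, hXu, rfl⟩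
  have hB : {v, update x j (b + 2), u} = B 0 :=
    eq_of_subset_of_card_le (by simp [insert_subset_iff, hv, hu, hX])
      (h.card_right_zero.trans hcard.ge)
  obtain ⟨k, hkj, -, rfl, hxy⟩ := h.exists_eq_update hx hv hvj fun w hw ↦ by
    have : w = v ∨ w = update x j (b + 2) ∨ w = u := by simpa [← hB] using hw
    obtain rfl | rfl | rfl := this <;> simp [huj]
  exact h.false_of_box_subset_cover_left (hB ▸ hcard)
    (h.box_update_add_two_subset_cover_left_one hx hkj hxy hv)
    (h.neg.box_update_add_two_subset_cover_left_one hx hkj hxy hv)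

lemma false_of_forall_ne_of_forall_ne (hx : ∀ w ∈ B 0, w j ≠ x j) (hb : ∀ w ∈ B 0, w j ≠ b) :
    False := by
  obtain ⟨v, hv, hvj⟩ := h.exists_apply_eq hx
  have hX := h.update_mem_right_zero hx
  have hvX : v ≠ update x j (b + 2) := fun hvX ↦
    h.symm.skew.add_two_right.1 (by rw [← hvj, hvX, update_self])
  have hcard : #(B 0) = 2 ∨ #(B 0) = 3 := by
    have := one_lt_card.2 ⟨v, hv, _, hX, hvX⟩
    have := h.card_right_zero
    omega
  obtain hcard | hcard := hcard
  · have hB : {v, update x j (b + 2)} = B 0 :=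
      eq_of_subset_of_card_le (by simp [insert_subset_iff, hv, hX])
        (by rw [hcard, card_pair hvX])
    obtain ⟨k, hkj, hk, rfl, hxy⟩ := h.exists_eq_update hx hv hvj fun w hw ↦ .inr <| by
      simpa [← hB] using hw
    exact disjoint_left.1 (h.right.disjoint 1)
      (h.neg.update_mem_right_three hx hb hkj hk hxy hv hcard)
      (h.update_mem_right_three hx hb hkj hk hxy hv hcard)
  · exact h.false_of_box_subset_cover_right hcard
      (h.box_update_subset_cover_right_one_of_forall_ne hx hb)
      (h.neg.box_update_subset_cover_right_one_of_forall_ne hx hb)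

lemma false_of_forall_ne (hx : ∀ w ∈ B 0, w j ≠ x j) : False := by
  by_cases! hb : ∃ u ∈ B 0, u j = b
  · obtain ⟨u, hu, huj⟩ := hb
    exact h.false_of_exists_apply_eq hx hu huj
  · exact h.false_of_forall_ne_of_forall_ne hx hb

end OneLetter

lemma false : False := by
  by_cases! hx : ∃ v ∈ B 0, v j = x j
  · obtain ⟨v, hv, hvj⟩ := hx
    by_cases! hy : ∃ u ∈ B 0, u j = y j
    · obtain ⟨u, hu, huj⟩ := hy
      exact h.false_of_apply_eq_of_apply_eq hv hvj hu huj
    · exact h.symm.false_of_forall_ne hy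
  · exact h.false_of_forall_ne hx

end IsCritical

namespace AreRivals

variable (h : AreRivals A B)
include h

lemma cover_zero_eq_of_card_eq_two (hA0 : #(A 0) = 2) (hAB : #(A 0) ≤ #(B 0))
    (hcard02 : #(A 0) + #(B 2) ≤ 5) (hcard : #(A 0) + #(A 1) + #(A 2) + #(A 3) ≤ 11) :
    cover (A 0) = cover (B 0) := by
  by_contra hne
  have hc0 : #(A 0) + #(A 1) = #(B 0) + #(B 1) := h.card_add 0
  have hc1 : #(A 1) + #(A 2) = #(B 1) + #(B 2) := h.card_add 1
  have hc2 : #(A 2) + #(A 3) = #(B 2) + #(B 3) := h.card_add 2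
  obtain ⟨z, hz⟩ := h.exists_mem_cover_sdiff hcard02 hne
  obtain ⟨z', hz'⟩ := h.symm.exists_mem_cover_sdiff (by omega) (Ne.symm hne)
  have hz1 : z ∈ cover (B 1) \ cover (A 1) := h.cover_sdiff_succ 0 ▸ hz
  have hz2 : z ∈ cover (A 2) \ cover (B 2) := h.cover_sdiff_add_two 0 ▸ hz
  have hz3 : z ∈ cover (B 3) \ cover (A 3) := h.cover_sdiff_succ 2 ▸ hz2
  have hz2' : z' ∈ cover (B 2) \ cover (A 2) := h.symm.cover_sdiff_add_two 0 ▸ hz'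
  have hA2 : 2 ≤ #(A 2) ∨ 5 ≤ #(A 0) := h.two_le_card_or_five_le_card hz2
  have hB2 : 2 ≤ #(B 2) ∨ 5 ≤ #(B 0) := h.symm.two_le_card_or_five_le_card hz2'
  have hB1 : 2 ≤ #(B 1) ∨ 5 ≤ #(B 3) := h.symm.two_le_card_or_five_le_card hz1
  have hB3 : 2 ≤ #(B 3) ∨ 5 ≤ #(B 1) := h.symm.two_le_card_or_five_le_card hz3
  have hB1pos := card_pos.2 (nonempty_of_mem_cover (mem_sdiff.1 hz1).1)
  have hB3pos := card_pos.2 (nonempty_of_mem_cover (mem_sdiff.1 hz3).1)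
  obtain ⟨x, y, j, b, hcrit⟩ := h.exists_isCritical_of_card ⟨z, hz⟩ hA0 (by omega) (by omega)
    (by omega) (by omega) fun _ ↦ ⟨by omega, by omega⟩
  exact hcrit.false

lemma cover_zero_eq_of_card_le (hAB : #(A 0) ≤ #(B 0)) (hcard02 : #(A 0) + #(B 2) ≤ 5)
    (hcard : #(A 0) + #(A 1) + #(A 2) + #(A 3) ≤ 11) : cover (A 0) = cover (B 0) := by
  by_contra hne
  have hc := h.card_zero_add_card_two
  obtain ⟨z, hz⟩ := h.exists_mem_cover_sdiff hcard02 hne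
  have hz2 : z ∈ cover (A 2) \ cover (B 2) := h.cover_sdiff_add_two 0 ▸ hz
  have hA0 : 2 ≤ #(A 0) ∨ 5 ≤ #(A 2) := h.two_le_card_or_five_le_card hz
  have hA2 : 2 ≤ #(A 2) ∨ 5 ≤ #(A 0) := h.two_le_card_or_five_le_card hz2
  have hA0pos := card_pos.2 (nonempty_of_mem_cover (mem_sdiff.1 hz).1)
  have hA2pos := card_pos.2 (nonempty_of_mem_cover (mem_sdiff.1 hz2).1)
  obtain hA | hA : #(A 0) = 2 ∨ #(A 2) = 2 := by omega
  · exact hne (h.cover_zero_eq_of_card_eq_two hA hAB hcard02 hcard)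
  · refine hne (h.forall_cover_eq (l := 2)
      ((h.shift 2).cover_zero_eq_of_card_eq_two hA ?_ ?_ ?_) 0)
    · change #(A 2) ≤ #(B 2); omega
    · change #(A 2) + #(B 0) ≤ 5; omega
    · change #(A 2) + #(A 3) + #(A 0) + #(A 1) ≤ 11; omega

lemma cover_zero_eq (hcard02 : #(A 0) + #(B 2) ≤ 5)
    (hcard : #(A 0) + #(A 1) + #(A 2) + #(A 3) ≤ 11) : cover (A 0) = cover (B 0) := by
  have hc0 : #(A 0) + #(A 1) = #(B 0) + #(B 1) := h.card_add 0
  have hc1 : #(A 1) + #(A 2) = #(B 1) + #(B 2) := h.card_add 1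
  have hc2 : #(A 2) + #(A 3) = #(B 2) + #(B 3) := h.card_add 2
  obtain hAB | hBA := le_total #(A 0) #(B 0)
  · exact h.cover_zero_eq_of_card_le hAB hcard02 hcard
  · exact (h.symm.cover_zero_eq_of_card_le hBA (by omega) (by omega)).symm

theorem cover_eq_cover (hcard : #(A 0) + #(A 1) + #(A 2) + #(A 3) ≤ 11) (l : ZMod 4) :
    cover (A l) = cover (B l) := by
  have hc2 : #(A 2) + #(A 3) = #(B 2) + #(B 3) := h.card_add 2
  obtain h0 | h1 : #(A 0) + #(B 2) ≤ 5 ∨ #(A 1) + #(B 3) ≤ 5 := by omega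
  · exact h.forall_cover_eq (h.cover_zero_eq h0 hcard) l
  · refine h.forall_cover_eq (l := 1) ((h.shift 1).cover_zero_eq h1 ?_) l
    change #(A 1) + #(A 2) + #(A 3) + #(A 0) ≤ 11
    omega

end AreRivals

end Stack

/-! ### From slices to codes -/

section Slice

variable {ι : Type*} [Fintype ι] [DecidableEq ι] {V W : Finset (ι → ZMod 4)} {i : ι} {l : ZMod 4}
  {u v x : ι → ZMod 4}

/-- The words of `V` with letter `l` at the coordinate `i`. Instead of dropping that coordinate,
its letter is reset to `0`, so that all slices live over the same index type. -/
def slice (V : Finset (ι → ZMod 4)) (i : ι) (l : ZMod 4) : Finset (ι → ZMod 4) :=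
  ({v ∈ V | v i = l} : Finset (ι → ZMod 4)).image fun v ↦ update v i 0

lemma mem_slice : u ∈ slice V i l ↔ u i = 0 ∧ update u i l ∈ V := by
  simp only [slice, mem_image, mem_filter]
  constructor
  · rintro ⟨v, ⟨hv, rfl⟩, rfl⟩
    simpa using hv
  · rintro ⟨hu, huV⟩
    exact ⟨update u i l, ⟨huV, update_self ..⟩, by rw [update_idem, ← hu, update_eq_self]⟩

lemma IsCode.slice (hV : IsCode V) (i : ι) (l : ZMod 4) : IsCode (slice V i l) := by
  constructor <;> intro u hu v hv <;> rw [mem_slice] at hu hv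
  · intro huv
    refine eq_of_update_eq_update (hV.isPacking _ hu.2 _ hv.2 fun k ↦ ?_) (hu.1.trans hv.1.symm)
    obtain rfl | hk := eq_or_ne k i
    · simpa only [update_self] using Meets.refl (fun _ : ι ↦ l) k
    · simpa only [update_of_ne hk] using huv k
  · intro k huv
    refine eq_of_update_eq_update (hV.eq_of_forall_ne _ hu.2 _ hv.2 k fun m hm ↦ ?_)
      (hu.1.trans hv.1.symm)
    obtain rfl | hmi := eq_or_ne m i
    · simp only [update_self]
    · simpa only [update_of_ne hmi] using huv m hm

lemma IsCode.isStack_slice (hV : IsCode V) (i : ι) : IsStack (Keller.slice V i) where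
  isCode := hV.slice i
  not_meets l u hu v hv huv := by
    rw [mem_slice] at hu hv
    have huv' := hV.isPacking _ hu.2 _ hv.2 fun k ↦ by
      obtain rfl | hk := eq_or_ne k i
      · simp only [update_self]
        exact ne_succ_add_two l
      · simpa only [update_of_ne hk] using huv k
    exact add_one_ne_self l (by simpa using (congrFun huv' i).symm)
  disjoint l := disjoint_left.2 fun u hu hu' ↦ by
    rw [mem_slice] at hu hu'
    refine hV.update_notMem hu.2 (i := i) (c := l + 2) ?_ (by simpa using hu'.2)
    simpa using add_two_ne_self l

lemma card_slice (V : Finset (ι → ZMod 4)) (i : ι) (l : ZMod 4) :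
    #(slice V i l) = #{v ∈ V | v i = l} :=
  card_image_of_injOn fun u hu v hv h ↦ eq_of_update_eq_update h <| by
    rw [(mem_filter.1 hu).2, (mem_filter.1 hv).2]

lemma sum_card_slice (V : Finset (ι → ZMod 4)) (i : ι) : ∑ l, #(slice V i l) = #V := by
  simp only [card_slice]
  exact (card_eq_sum_card_fiberwise fun v _ ↦ mem_univ (v i)).symm

lemma mem_cover_slice : x ∈ cover (slice V i l) ↔
    x i ∈ arc 0 ∧ ∃ v ∈ V, v i = l ∧ ∀ k ≠ i, x k ∈ arc (v k) := by
  simp only [mem_cover, slice, mem_image, mem_filter]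
  constructor
  · rintro ⟨_, ⟨v, ⟨hv, hvl⟩, rfl⟩, hx⟩
    exact ⟨(mem_box_update.1 hx).1, v, hv, hvl, (mem_box_update.1 hx).2⟩
  · rintro ⟨hxi, v, hv, hvl, hx⟩
    exact ⟨_, ⟨v, ⟨hv, hvl⟩, rfl⟩, mem_box_update.2 ⟨hxi, hx⟩⟩

lemma mem_cover_slice_union : x ∈ cover (slice V i l) ∪ cover (slice V i (l + 1)) ↔
    x i ∈ arc 0 ∧ update x i (l + 1) ∈ cover V := by
  rw [mem_union, mem_cover_slice, mem_cover_slice, mem_cover]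
  simp only [update_mem_box, succ_mem_arc_iff]
  grind

lemma mem_cover_filter_iff : x ∈ cover {v ∈ V | v i = l} ↔
    x i ∈ arc l ∧ update x i 0 ∈ cover (slice V i l) := by
  have h0 : (0 : ZMod 4) ∈ arc 0 := by decide
  rw [mem_cover_slice, mem_cover, update_self]
  simp only [mem_filter, mem_box_iff_forall_ne i]
  grind

lemma IsCode.areRivals_slice (hV : IsCode V) (hW : IsCode W) (hVW : Disjoint V W)
    (h : cover V = cover W) (i : ι) : AreRivals (Keller.slice V i) (Keller.slice W i) where
  left := hV.isStack_slice i
  right := hW.isStack_slice i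
  disjoint l := disjoint_left.2 fun u hu hu' ↦
    disjoint_left.1 hVW (mem_slice.1 hu).2 (mem_slice.1 hu').2
  cover_eq l := by
    ext x
    rw [mem_cover_slice_union, mem_cover_slice_union, h]

lemma IsCode.cover_filter_eq (hV : IsCode V) (hW : IsCode W) (hVW : Disjoint V W)
    (h : cover V = cover W) (hcard : #V ≤ 11) (i : ι) (l : ZMod 4) :
    cover {v ∈ V | v i = l} = cover {v ∈ W | v i = l} := by
  have hsum : #(Keller.slice V i 0) + #(Keller.slice V i 1) + #(Keller.slice V i 2) +
      #(Keller.slice V i 3) ≤ 11 :=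
    ((Fin.sum_univ_four _).symm.trans (sum_card_slice V i)).trans_le hcard
  ext x
  rw [mem_cover_filter_iff, mem_cover_filter_iff,
    (hV.areRivals_slice hW hVW h i).cover_eq_cover hsum]

lemma IsCode.cover_filter_forall_eq (hV : IsCode V) (hW : IsCode W) (hVW : Disjoint V W)
    (h : cover V = cover W) (hcard : #V ≤ 11) (v : ι → ZMod 4) (T : Finset ι) :
    cover {u ∈ V | ∀ i ∈ T, u i = v i} = cover {u ∈ W | ∀ i ∈ T, u i = v i} := by
  induction T using Finset.induction_on with
  | empty => simpa using h
  | insert i T _ ih =>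
    have := (hV.mono (filter_subset _ _)).cover_filter_eq (hW.mono (filter_subset _ _))
      (disjoint_filter_filter hVW) ih ((card_filter_le _ _).trans hcard) i (v i)
    simpa only [filter_filter, forall_mem_insert, and_comm] using this

lemma IsCode.eq_empty_of_disjoint (hV : IsCode V) (hW : IsCode W) (hVW : Disjoint V W)
    (h : cover V = cover W) (hcard : #V ≤ 11) : V = ∅ := by
  refine eq_empty_of_forall_notMem fun v hv ↦ disjoint_left.1 hVW hv ?_
  have hcover := hV.cover_filter_forall_eq hW hVW h hcard v univ
  have hvV : v ∈ ({u ∈ V | ∀ i ∈ univ, u i = v i} : Finset _) :=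
    mem_filter.2 ⟨hv, fun _ _ ↦ rfl⟩
  obtain ⟨w, hw⟩ := nonempty_of_box_subset_cover (hcover ▸ box_subset_cover hvV)
  obtain ⟨hwW, hwv⟩ := mem_filter.1 hw
  rwa [← funext fun i ↦ hwv i (mem_univ i)]

lemma IsPacking.cover_sdiff_subset (hV : IsPacking V) (h : cover V = cover W) :
    cover (V \ W) ⊆ cover (W \ V) := by
  intro x hx
  obtain ⟨v, hv, hxv⟩ := mem_cover.1 hx
  obtain ⟨hvV, hvW⟩ := mem_sdiff.1 hv
  obtain ⟨w, hw, hxw⟩ := mem_cover.1 (h ▸ box_subset_cover hvV hxv)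
  refine mem_cover.2 ⟨w, mem_sdiff.2 ⟨hw, fun hwV ↦ hvW ?_⟩, hxw⟩
  rwa [hV v hvV w hwV (meets_of_mem hxv hxw)]

theorem IsCode.eq_of_cover_eq (hV : IsCode V) (hW : IsCode W) (h : cover V = cover W)
    (hcard : #V ≤ 11) : V = W := by
  have hsdiff : V \ W = ∅ :=
    (hV.mono sdiff_subset).eq_empty_of_disjoint (hW.mono sdiff_subset) disjoint_sdiff_sdiff
      ((hV.isPacking.cover_sdiff_subset h).antisymm (hW.isPacking.cover_sdiff_subset h.symm))
      ((card_le_card sdiff_subset).trans hcard)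
  exact eq_of_subset_of_card_le (sdiff_eq_empty_iff_subset.1 hsdiff)
    (hV.isPacking.card_eq_of_cover_eq hW.isPacking h).ge

end Slice

section Graph

variable {d : ℕ} {V W : Finset (Fin d → ZMod 4)}

lemma isCode_of_kellerAdj (hV : ∀ u ∈ V, ∀ v ∈ V, u ≠ v → KellerAdj u v) : IsCode V where
  isPacking u hu v hv huv := by
    by_contra hne
    obtain ⟨i, hi⟩ := (hV u hu v hv hne).2
    exact huv i (sub_eq_iff_eq_add'.1 hi)
  eq_of_forall_ne u hu v hv i huv := by
    by_contra hne
    obtain ⟨k, hk, hki⟩ := Set.exists_ne_of_one_lt_ncard (hV u hu v hv hne).1 i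
    exact hk (huv k hki)

lemma kellerG_eq_prod_card (v w : Fin d → ZMod 4) :
    kellerG v w = ∏ i, #(arc (v i) ∩ arc (w i)) :=
  prod_congr rfl fun i _ ↦ (card_arc_inter (v i) (w i)).symm

lemma IsPacking.cover_subset_cover_of_sum_kellerG (hV : IsPacking V)
    (h : ∀ w ∈ W, ∑ v ∈ V, kellerG v w = 2 ^ d) : cover W ⊆ cover V := by
  refine biUnion_subset.2 fun w hw ↦
    inter_eq_right.1 (eq_of_subset_of_card_le inter_subset_right ?_)
  have hsum := h w hw
  simp only [kellerG_eq_prod_card] at hsum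
  rw [card_box, Fintype.card_fin, ← hsum]
  exact (hV.card_cover_inter_piFinset _).ge

end Graph

end Keller

/-- Any two equivalent cliques in the `d`-dimensional Keller graph, each having
at most 11 vertices, are equal. -/
theorem equivalent_cliques_eq {d : ℕ} (V W : Finset (Fin d → ZMod 4))
    (hV : ∀ u ∈ V, ∀ v ∈ V, u ≠ v → KellerAdj u v)
    (hW : ∀ u ∈ W, ∀ v ∈ W, u ≠ v → KellerAdj u v)
    (hVW : ∀ w ∈ W, ∑ v ∈ V, kellerG v w = 2 ^ d)
    (hWV : ∀ v ∈ V, ∑ w ∈ W, kellerG w v = 2 ^ d)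
    (hVcard : V.card ≤ 11) (hWcard : W.card ≤ 11) :
    V = W := by
  have hV' := Keller.isCode_of_kellerAdj hV
  have hW' := Keller.isCode_of_kellerAdj hW
  have hcover : Keller.cover V = Keller.cover W :=
    (hW'.isPacking.cover_subset_cover_of_sum_kellerG hWV).antisymm
      (hV'.isPacking.cover_subset_cover_of_sum_kellerG hVW)
  exact hV'.eq_of_cover_eq hW' hcover hVcard
end
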